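/- For any two vertices u and w that see each other with w in a positive cone of u, the constrained half-θ₆-graph contains a path from u to w of length at most (√3·cos α + sin α)·|uw| lying inside the canonical triangle T(u,w), where α is the unsigned angle between uw and the bisector of the cone of u containing w. Consequently, the constrained half-θ₆-graph is a 2-spanner of the visibility graph Vis(P,S). -/

import Mathlib

/-! The path is built by induction on the size `E i (w - u)` of the canonical triangle of `u`, `w`.

Write `a = -E j` and `b = -E k` for the coordinates, along the two boundary rays, of a vector in the
positive cone `i`. The bound of the theorem is `2/√3 * (a + b + max a b)` evaluated at `w - u`, and
the induction carries a second, sharper bound: if `u` sees no vertex to the right of `uw` in the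
same subcone and at most as high as `w`, then `2/√3 * (2a + b)` suffices, even when `b > a`.

Let `v` be the lowest vertex in the subcone of `w`, so that `uv` is an edge. If `v ≠ w`, say `v` is
to the left of `uw`. Nothing is visible to the right of `uv` at the height of `v` or below, so the
sharp bound applies to `uv`. From `v` to `w` the walk follows the lower convex chain of the vertices
of the triangle `uvw` other than `u`, found by gift wrapping (`Ch.exists_next`). Consecutive chain
vertices `v`, `p` see each other: `u` sees each chain vertex because it minimises a linear form over
the triangle (`Plane.sees_of_extreme`), and the triangle `uvp` is empty (`Plane.sees_across`). Every
chain edge is shorter, in the sense of the induction, than `uw`, and with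
`(da, db) = (a, b)(p - v)` its cost is, up to the factor `2/√3`:

* `2 da + db` if `db < 0`: then `v` is in a positive cone of `p`, and the convexity of the chain
  leaves nothing to the right of `pv`, so the sharp bound applies (`Nx.re'`);
* `2 da + db` or `da + 2 db`, whichever is larger, if `db > 0`, by the general bound;
* always `2 da + db` when nothing is visible to the right of `uw`, because this emptiness is
  inherited by the chain edges (`Nx.re`).

The chain turns left, so once `db ≥ da` holds it holds for all later edges. Summing up, the sum
telescopes to the general bound, and to the sharp bound in the last case (`Ch.res`, `M_step`).

Visibility arguments are done with convexity and cross products, for general constraint sets; the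
key topological fact is that a constraint entering a triangle cannot leave it through a visibility
edge, so that it either crosses the third side or ends inside.
-/

open Real Set

noncomputable section

namespace CHT6

/-- Points in the plane. -/
abbrev Pt := ℝ × ℝ

/-- Euclidean distance. -/
def dst (p q : Pt) : ℝ := Real.sqrt ((p.1 - q.1) ^ 2 + (p.2 - q.2) ^ 2)

/-- Unsigned angle at `q` between segments `qp` and `qr`. -/
def ang (p q r : Pt) : ℝ :=
  Real.arccos (((p.1 - q.1) * (r.1 - q.1) + (p.2 - q.2) * (r.2 - q.2)) / (dst p q * dst r q))

/-- 2D cross product. -/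
def crossP (a b : Pt) : ℝ := a.1 * b.2 - a.2 * b.1

/-- The segments `ab` and `cd` properly cross: their relative interiors meet. -/
def PCross (a b c d : Pt) : Prop := (openSegment ℝ a b ∩ openSegment ℝ c d).Nonempty

/-- `uz` is a constraint of `S`. -/
def Constr (S : Set (Pt × Pt)) (u z : Pt) : Prop := (u, z) ∈ S ∨ (z, u) ∈ S

/-- `u` and `v` see each other: `uv` is a constraint or no constraint properly crosses it. -/
def CanSee (S : Set (Pt × Pt)) (u v : Pt) : Prop :=
  Constr S u v ∨ ∀ c ∈ S, ¬ PCross c.1 c.2 u v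

/-- Rotation of the plane by angle `θ` about the origin. -/
def rot (θ : ℝ) (p : Pt) : Pt :=
  (Real.cos θ * p.1 - Real.sin θ * p.2, Real.sin θ * p.1 + Real.cos θ * p.2)

/-- `p` relative to `u`, rotated so that the positive cone `Cᵢ` becomes the upward cone. -/
def rel (i : ℕ) (u p : Pt) : Pt := rot (-(2 * Real.pi * i / 3)) (p - u)

/-- `p` lies in the (open) positive cone `Cᵢ` of `u` (width π/3; `C₀` is upward vertical). -/
def inPos (i : ℕ) (u p : Pt) : Prop := Real.sqrt 3 * |(rel i u p).1| < (rel i u p).2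

/-- `p` lies in the negative cone `C̄ᵢ` of `u`. -/
def inNeg (i : ℕ) (u p : Pt) : Prop := inPos i p u

/-- Length of the projection of `p` onto the bisector of the positive cone `Cᵢ` of `u`. -/
def projLen (i : ℕ) (u p : Pt) : ℝ := (rel i u p).2

/-- Projected distance of `p` from `u` for the negative cone `C̄ᵢ` of `u`. -/
def negProj (i : ℕ) (u p : Pt) : ℝ := projLen i p u

/-- `p` and `q` are not strictly separated, within the cone `cone` at `u`, by a constraint
incident to `u`: they lie in a common (closed) subcone. -/
def SameSubIn (cone : Pt → Pt → Prop) (S : Set (Pt × Pt)) (u p q : Pt) : Prop :=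
  ∀ z, Constr S u z → cone u z →
    ¬ (crossP (z - u) (p - u) * crossP (z - u) (q - u) < 0)

def SameSubPos (S : Set (Pt × Pt)) (i : ℕ) (u p q : Pt) : Prop := SameSubIn (inPos i) S u p q

def SameSubNeg (S : Set (Pt × Pt)) (i : ℕ) (u p q : Pt) : Prop := SameSubIn (inNeg i) S u p q

/-- General position: no two points of `P` define a line parallel to one of the six cone rays
(slopes `0`, `√3`, `-√3`), and no three points of `P` are collinear. -/
def GenPos (P : Set Pt) : Prop :=
  (∀ p ∈ P, ∀ q ∈ P, p ≠ q →
    p.2 ≠ q.2 ∧ q.2 - p.2 ≠ Real.sqrt 3 * (q.1 - p.1) ∧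
      q.2 - p.2 ≠ -(Real.sqrt 3 * (q.1 - p.1))) ∧
  (∀ p ∈ P, ∀ q ∈ P, ∀ r ∈ P, p ≠ q → q ≠ r → p ≠ r → ¬ Collinear ℝ ({p, q, r} : Set Pt))

/-- `v` is, among the vertices visible from `u` in the positive subcone of `u` containing `v`,
the one minimizing the projection onto the cone bisector: `u` adds the edge `uv`. -/
def EdgeDir (P : Set Pt) (S : Set (Pt × Pt)) (u v : Pt) : Prop :=
  u ∈ P ∧ v ∈ P ∧ ∃ i < 3, inPos i u v ∧ CanSee S u v ∧
    ∀ w ∈ P, w ≠ u → inPos i u w → CanSee S u w → SameSubPos S i u v w →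
      projLen i u v ≤ projLen i u w

/-- Edges of the constrained half-θ₆-graph. -/
def HEdge (P : Set Pt) (S : Set (Pt × Pt)) (u v : Pt) : Prop :=
  EdgeDir P S u v ∨ EdgeDir P S v u

/-- `f` is a path in the graph with edge relation `E`. -/
def IsPath (E : Pt → Pt → Prop) {n : ℕ} (f : Fin (n + 1) → Pt) : Prop :=
  ∀ j : Fin n, E (f j.castSucc) (f j.succ)

/-- Euclidean length of a polygonal path. -/
def pathLen {n : ℕ} (f : Fin (n + 1) → Pt) : ℝ :=
  ∑ j : Fin n, dst (f j.castSucc) (f j.succ)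

/-- `x` is a vertex of the canonical sequence of `u` in the negative cone `C̄ᵘᵢ`. -/
def CanonVert (P : Set Pt) (S : Set (Pt × Pt)) (i : ℕ) (u x : Pt) : Prop :=
  x ∈ P ∧ HEdge P S u x ∧ inNeg i u x

/-- `v` and `w` are consecutive (in counterclockwise order) vertices of the canonical path of
`u` in a subcone of the negative cone `C̄ᵘᵢ`. -/
def ConsecCanon (P : Set Pt) (S : Set (Pt × Pt)) (i : ℕ) (u v w : Pt) : Prop :=
  CanonVert P S i u v ∧ CanonVert P S i u w ∧ SameSubNeg S i u v w ∧
  crossP (v - u) (w - u) > 0 ∧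
  ∀ x ∈ P, CanonVert P S i u x → SameSubNeg S i u v x →
    ¬ (crossP (v - u) (x - u) > 0 ∧ crossP (x - u) (w - u) > 0)

/-- `x` is a closest canonical vertex of `u` in (a subcone of) the negative cone `C̄ᵘᵢ`,
distances being measured by projection onto the cone bisector. -/
def ClosestCanon (P : Set Pt) (S : Set (Pt × Pt)) (i : ℕ) (u x : Pt) : Prop :=
  CanonVert P S i u x ∧
  ∀ y ∈ P, CanonVert P S i u y → SameSubNeg S i u x y → negProj i u x ≤ negProj i u y

/-- Edges of the bounded-degree graph `G₉`: canonical-path edges together with, for each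
negative subcone, the edge to the closest canonical vertex. -/
def G9Edge (P : Set Pt) (S : Set (Pt × Pt)) (a b : Pt) : Prop :=
  (∃ u ∈ P, ∃ i < 3, ConsecCanon P S i u a b ∨ ConsecCanon P S i u b a) ∨
  (∃ i < 3, ClosestCanon P S i a b ∨ ClosestCanon P S i b a)

/-- Coordinate of `p` along the right boundary direction `(1/2, √3/2)` of the upward cone. -/
def coordA (p : Pt) : ℝ := p.1 + p.2 / Real.sqrt 3

/-- Coordinate of `p` along the left boundary direction `(-1/2, √3/2)` of the upward cone. -/
def coordB (p : Pt) : ℝ := -p.1 + p.2 / Real.sqrt 3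

end CHT6

namespace CHT6

/-! ### Triangles, segments and constraints -/

lemma mem_open_iff {a b y : Pt} :
    y ∈ openSegment ℝ a b ↔ ∃ t : ℝ, 0 < t ∧ t < 1 ∧ y = a + t • (b - a) := by
  rw [openSegment_eq_image']
  constructor
  · rintro ⟨t, ⟨h0, h1⟩, rfl⟩; exact ⟨t, h0, h1, rfl⟩
  · rintro ⟨t, h0, h1, rfl⟩; exact ⟨t, ⟨h0, h1⟩, rfl⟩

lemma mem_seg_iff {a b y : Pt} :
    y ∈ segment ℝ a b ↔ ∃ t : ℝ, 0 ≤ t ∧ t ≤ 1 ∧ y = a + t • (b - a) := by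
  rw [segment_eq_image']
  constructor
  · rintro ⟨t, ⟨h0, h1⟩, rfl⟩; exact ⟨t, h0, h1, rfl⟩
  · rintro ⟨t, h0, h1, rfl⟩; exact ⟨t, ⟨h0, h1⟩, rfl⟩

lemma cramer {X Y : Pt} (h : crossP X Y ≠ 0) (Z : Pt) :
    Z = (crossP Z Y / crossP X Y) • X + (crossP X Z / crossP X Y) • Y := by
  ext
  · simp only [Prod.fst_add, Prod.smul_fst, smul_eq_mul]
    field_simp
    simp only [crossP]; ring
  · simp only [Prod.snd_add, Prod.smul_snd, smul_eq_mul]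
    field_simp
    simp only [crossP]; ring

lemma collinear_of_crossP {p q r : Pt} (hpq : p ≠ q) (h : crossP (q - p) (r - p) = 0) :
    Collinear ℝ ({p, q, r} : Set Pt) := by
  rw [collinear_iff_of_mem (p₀ := p) (by simp)]
  refine ⟨q - p, ?_⟩
  have hq : q - p ≠ 0 := sub_ne_zero.2 hpq.symm
  have key : ∃ t : ℝ, r - p = t • (q - p) := by
    simp only [crossP] at h
    by_cases h1 : (q - p).1 = 0
    · have h2 : (q - p).2 ≠ 0 := fun h2 => hq (Prod.ext h1 h2)
      refine ⟨(r - p).2 / (q - p).2, Prod.ext ?_ ?_⟩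
      · have : (r - p).1 = 0 := by
          rw [h1] at h
          have : (q - p).2 * (r - p).1 = 0 := by linarith
          exact (mul_eq_zero.1 this).resolve_left h2
        rw [Prod.smul_fst, this, h1]; simp
      · rw [Prod.smul_snd, smul_eq_mul]; field_simp
    · refine ⟨(r - p).1 / (q - p).1, Prod.ext ?_ ?_⟩
      · rw [Prod.smul_fst, smul_eq_mul]; field_simp
      · rw [Prod.smul_snd, smul_eq_mul]; field_simp; linarith
  obtain ⟨t, ht⟩ := key
  rintro x (rfl | rfl | rfl)
  · exact ⟨0, by simp⟩
  · exact ⟨1, by simp⟩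
  · exact ⟨t, by rw [← ht]; simp⟩

/-- The standing assumptions: constraints have their endpoints in `P` and do not cross each
other, and no three points of `P` are collinear (in cross-product form). -/
structure Plane (P : Set Pt) (S : Set (Pt × Pt)) : Prop where
  mem : ∀ c ∈ S, c.1 ∈ P ∧ c.2 ∈ P
  nc : ∀ c ∈ S, ∀ d ∈ S, c ≠ d → ¬ PCross c.1 c.2 d.1 d.2
  gp : ∀ p ∈ P, ∀ q ∈ P, ∀ r ∈ P, p ≠ q → q ≠ r → p ≠ r → crossP (q - p) (r - p) ≠ 0

/-- The closed triangle with vertices `O`, `X`, `Y`. -/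
def Tri (O X Y : Pt) : Set Pt :=
  {q | ∃ α β : ℝ, 0 ≤ α ∧ 0 ≤ β ∧ α + β ≤ 1 ∧ q = O + α • (X - O) + β • (Y - O)}

lemma Tri_swap {O X Y q : Pt} (h : q ∈ Tri O X Y) : q ∈ Tri O Y X := by
  obtain ⟨α, β, h1, h2, h3, rfl⟩ := h
  exact ⟨β, α, h2, h1, by linarith, by abel⟩

lemma Tri_X (O X Y : Pt) : X ∈ Tri O X Y := ⟨1, 0, by norm_num, le_rfl, by norm_num, by simp⟩

lemma Tri_Y (O X Y : Pt) : Y ∈ Tri O X Y := ⟨0, 1, le_rfl, by norm_num, by norm_num, by simp⟩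

lemma Tri_sub {O X Y p q : Pt} (hp : p ∈ Tri O X Y) (hq : q ∈ Tri O X p) : q ∈ Tri O X Y := by
  obtain ⟨α, β, h1, h2, h3, rfl⟩ := hp
  obtain ⟨γ, δ, h4, h5, h6, rfl⟩ := hq
  refine ⟨γ + δ * α, δ * β, by positivity, by positivity, by nlinarith, ?_⟩
  ext <;> simp <;> ring

/-- The interior of a visibility edge `ab` meets no constraint other than `ab` itself, not even at
an endpoint of the constraint. -/
lemma Plane.key {P : Set Pt} {S : Set (Pt × Pt)} (H : Plane P S) {a b : Pt} (ha : a ∈ P)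
    (hb : b ∈ P) (hab : a ≠ b) (hs : CanSee S a b) {c : Pt × Pt} (hc : c ∈ S) {y : Pt}
    (hy : y ∈ openSegment ℝ a b) (hyc : y ∈ segment ℝ c.1 c.2) : c = (a, b) ∨ c = (b, a) := by
  have hend : ∀ z ∈ P, z ∉ openSegment ℝ a b := by
    intro z hz hzo
    obtain ⟨t, h0, h1, rfl⟩ := mem_open_iff.1 hzo
    have hba : b - a ≠ 0 := sub_ne_zero.2 hab.symm
    refine H.gp a ha b hb _ hz hab ?_ ?_ ?_
    · intro h
      have : (1 - t) • (b - a) = 0 := by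
        rw [sub_smul, one_smul, sub_eq_zero]
        nth_rewrite 1 [h]; simp
      rcases smul_eq_zero.1 this with h | h
      · linarith
      · exact hba h
    · intro h
      have : t • (b - a) = 0 := by simpa using h
      rcases smul_eq_zero.1 this with h | h
      · linarith
      · exact hba h
    · simp only [crossP, add_sub_cancel_left, Prod.smul_fst, Prod.smul_snd, smul_eq_mul]; ring
  have hyo : y ∈ openSegment ℝ c.1 c.2 := by
    refine mem_openSegment_of_ne_left_right ?_ ?_ hyc
    · rintro rfl; exact hend _ (H.mem c hc).1 hy
    · rintro rfl; exact hend _ (H.mem c hc).2 hy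
  rcases hs with hs | hs
  · rcases hs with hs | hs
    · left; by_contra hne
      exact H.nc c hc _ hs hne ⟨y, hyo, hy⟩
    · right; by_contra hne
      exact H.nc c hc _ hs hne ⟨y, hyo, by rwa [openSegment_symm]⟩
  · exact absurd ⟨y, hyo, hy⟩ (hs c hc)

/-- Leaving a triangle: a segment that starts in the relative interior of the side `OY` and
goes to the side of the line `OY` containing `X` either ends in the triangle `OXY` or meets one
of the other two sides. -/
lemma exit_tri {O X Y y z : Pt} (hy : y ∈ openSegment ℝ O Y)
    (hz : 0 < crossP (Y - O) (X - O) * crossP (Y - O) (z - O)) :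
    z ∈ Tri O X Y ∨ ∃ g ∈ segment ℝ y z,
      g ∈ openSegment ℝ O X ∨ g = X ∨ g ∈ openSegment ℝ X Y := by
  obtain ⟨η, hη0, hη1, rfl⟩ := mem_open_iff.1 hy
  have hD : crossP (X - O) (Y - O) ≠ 0 := by
    intro h
    have : crossP (Y - O) (X - O) = 0 := by simp only [crossP] at h ⊢; linarith
    rw [this] at hz; simp at hz
  have hzc := cramer hD (z - O)
  set ζ := crossP (z - O) (Y - O) / crossP (X - O) (Y - O) with hζ
  set ξ := crossP (X - O) (z - O) / crossP (X - O) (Y - O) with hξ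
  have hζ0 : 0 < ζ := by
    have e1 : crossP (z - O) (Y - O) = - crossP (Y - O) (z - O) := by simp only [crossP]; ring
    have e2 : crossP (X - O) (Y - O) = - crossP (Y - O) (X - O) := by simp only [crossP]; ring
    rw [hζ, e1, e2, neg_div_neg_eq]
    rcases pos_and_pos_or_neg_and_neg_of_mul_pos hz with ⟨h1, h2⟩ | ⟨h1, h2⟩
    · exact div_pos h2 h1
    · exact div_pos_of_neg_of_neg h2 h1
  clear_value ζ ξ
  obtain rfl : z = O + ζ • (X - O) + ξ • (Y - O) := by rw [add_assoc, ← hzc]; abel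
  have out3 : ∀ t : ℝ, 0 ≤ t → t ≤ 1 → t * ζ + (η + t * (ξ - η)) = 1 → 0 < t * ζ →
      0 < η + t * (ξ - η) → ∃ g ∈ segment ℝ (O + η • (Y - O)) (O + ζ • (X - O) + ξ • (Y - O)),
      g ∈ openSegment ℝ O X ∨ g = X ∨ g ∈ openSegment ℝ X Y := by
    intro t h0 h1 hs hp hq
    refine ⟨_, mem_seg_iff.2 ⟨t, h0, h1, rfl⟩, Or.inr (Or.inr (mem_open_iff.2
      ⟨η + t * (ξ - η), hq, by linarith, ?_⟩))⟩
    have : t * ζ = 1 - (η + t * (ξ - η)) := by linarith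
    ext
    · simp only [Prod.fst_add, Prod.smul_fst, Prod.fst_sub, smul_eq_mul]
      linear_combination (X.1 - O.1) * this
    · simp only [Prod.snd_add, Prod.smul_snd, Prod.snd_sub, smul_eq_mul]
      linear_combination (X.2 - O.2) * this
  by_cases hξ0 : 0 ≤ ξ
  · by_cases hsum : ζ + ξ ≤ 1
    · left; exact ⟨ζ, ξ, hζ0.le, hξ0, hsum, rfl⟩
    · right
      push Not at hsum
      have hd : 0 < ζ + ξ - η := by linarith
      have ht0 : 0 < (1 - η) / (ζ + ξ - η) := div_pos (by linarith) hd
      have ht1 : (1 - η) / (ζ + ξ - η) < 1 := by rw [div_lt_one hd]; linarith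
      set t := (1 - η) / (ζ + ξ - η) with ht
      have htt : t * (ζ + ξ - η) = 1 - η := by rw [ht]; field_simp
      refine out3 t ht0.le ht1.le (by linarith) (by positivity) ?_
      have : 0 < (1 - t) * η := mul_pos (by linarith) hη0
      nlinarith [mul_nonneg ht0.le hξ0]
  · right
    push Not at hξ0
    have hd : 0 < η - ξ := by linarith
    have ht0 : 0 < η / (η - ξ) := div_pos hη0 hd
    have ht1 : η / (η - ξ) < 1 := by rw [div_lt_one hd]; linarith
    set s := η / (η - ξ) with hs
    have hss : s * (η - ξ) = η := by rw [hs]; field_simp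
    by_cases hc : s * ζ ≤ 1
    · refine ⟨_, mem_seg_iff.2 ⟨s, ht0.le, ht1.le, rfl⟩, ?_⟩
      have e : O + η • (Y - O) + s • (O + ζ • (X - O) + ξ • (Y - O) - (O + η • (Y - O)))
          = O + (s * ζ) • (X - O) := by
        ext
        · simp only [Prod.fst_add, Prod.smul_fst, Prod.fst_sub, smul_eq_mul]
          linear_combination (-(Y.1 - O.1)) * hss
        · simp only [Prod.snd_add, Prod.smul_snd, Prod.snd_sub, smul_eq_mul]
          linear_combination (-(Y.2 - O.2)) * hss
      rw [e]
      rcases hc.lt_or_eq with hc | hc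
      · left; exact mem_open_iff.2 ⟨s * ζ, by positivity, hc, rfl⟩
      · right; left; rw [hc]; simp
    · push Not at hc
      have hd2 : 0 < ζ + ξ - η := by
        by_contra hcon
        push Not at hcon
        nlinarith
      have htp : 0 < (1 - η) / (ζ + ξ - η) := div_pos (by linarith) hd2
      set t := (1 - η) / (ζ + ξ - η) with ht
      have htt : t * (ζ + ξ - η) = 1 - η := by rw [ht]; field_simp
      have hts : t < s := by
        by_contra hcon
        push Not at hcon
        nlinarith
      refine out3 t htp.le (by linarith) (by linarith) (by positivity) ?_
      nlinarith

/-! ### Visibility of extreme vertices -/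

lemma not_mem_open {a b : Pt} (h : a ≠ b) : a ∉ openSegment ℝ a b ∧ b ∉ openSegment ℝ a b := by
  constructor
  · rw [left_mem_openSegment_iff]; exact h
  · rw [right_mem_openSegment_iff]; exact h

/-- If a constraint crosses `up` and `up` is not a constraint, both endpoints of the constraint
are off the line `up`, on opposite sides. -/
lemma Plane.side {P : Set Pt} {S : Set (Pt × Pt)} (H : Plane P S) {u p : Pt} (hu : u ∈ P)
    (hp : p ∈ P) (hup : u ≠ p) (hn : ¬ Constr S u p) {c : Pt × Pt} (hc : c ∈ S) {y : Pt}
    (hy : y ∈ openSegment ℝ u p) (hyc : y ∈ openSegment ℝ c.1 c.2) :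
    crossP (p - u) (c.1 - u) * crossP (p - u) (c.2 - u) < 0 := by
  obtain ⟨t, h0, h1, ht⟩ := mem_open_iff.1 hy
  obtain ⟨s, s0, s1, hs⟩ := mem_open_iff.1 hyc
  have hlin : (1 - s) * crossP (p - u) (c.1 - u) + s * crossP (p - u) (c.2 - u) = 0 := by
    have e1 : crossP (p - u) (y - u) = 0 := by
      rw [ht]; simp only [crossP, add_sub_cancel_left, Prod.smul_fst, Prod.smul_snd, smul_eq_mul]
      ring
    rw [hs] at e1
    simp only [crossP, Prod.fst_sub, Prod.snd_sub, Prod.fst_add, Prod.snd_add, Prod.smul_fst,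
      Prod.smul_snd, smul_eq_mul] at e1 ⊢
    linear_combination e1
  have hcol : ∀ z ∈ P, crossP (p - u) (z - u) = 0 → z = u ∨ z = p := by
    intro z hz h
    by_contra hcon
    push Not at hcon
    exact H.gp u hu p hp z hz hup hcon.2.symm hcon.1.symm h
  have hmem := H.mem c hc
  have hyu : y ≠ u := by rintro rfl; exact (not_mem_open hup).1 hy
  have hyp : y ≠ p := by rintro rfl; exact (not_mem_open hup).2 hy
  have hboth : ¬ (crossP (p - u) (c.1 - u) = 0 ∧ crossP (p - u) (c.2 - u) = 0) := by
    rintro ⟨h1, h2⟩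
    have ceq : c = (c.1, c.2) := rfl
    rcases hcol _ hmem.1 h1 with h1 | h1 <;> rcases hcol _ hmem.2 h2 with h2 | h2
    · rw [h1, h2, openSegment_same] at hyc; exact hyu hyc
    · apply hn; left; rw [ceq, h1, h2] at hc; exact hc
    · apply hn; right; rw [ceq, h1, h2] at hc; exact hc
    · rw [h1, h2, openSegment_same] at hyc; exact hyp hyc
  have hne1 : crossP (p - u) (c.1 - u) ≠ 0 := by
    intro h; apply hboth; refine ⟨h, ?_⟩
    rw [h] at hlin
    have : s * crossP (p - u) (c.2 - u) = 0 := by linarith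
    exact (mul_eq_zero.1 this).resolve_left s0.ne'
  have h1s : 0 < 1 - s := by linarith
  rcases lt_or_gt_of_ne hne1 with h | h
  · apply mul_neg_of_neg_of_pos h
    have := mul_neg_of_pos_of_neg h1s h
    by_contra hcon; push Not at hcon
    nlinarith
  · apply mul_neg_of_pos_of_neg h
    have := mul_pos h1s h
    by_contra hcon; push Not at hcon
    nlinarith

lemma sub_mem_seg {c : Pt × Pt} {y z g : Pt} (hy : y ∈ openSegment ℝ c.1 c.2)
    (hz : z = c.1 ∨ z = c.2) (hg : g ∈ segment ℝ y z) : g ∈ segment ℝ c.1 c.2 := by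
  have hy' := openSegment_subset_segment ℝ _ _ hy
  refine (convex_segment c.1 c.2).segment_subset hy' ?_ hg
  rcases hz with rfl | rfl
  · exact left_mem_segment _ _ _
  · exact right_mem_segment _ _ _

lemma crossP_open {a b y : Pt} (hy : y ∈ openSegment ℝ a b) : crossP (b - a) (y - a) = 0 := by
  obtain ⟨t, h0, h1, rfl⟩ := mem_open_iff.1 hy
  simp only [crossP, add_sub_cancel_left, Prod.smul_fst, Prod.smul_snd, smul_eq_mul]
  ring

/-- Two open segments sharing the endpoint `a` and meeting each other are collinear. -/
lemma crossP_open2 {a b p y : Pt} (hy : y ∈ openSegment ℝ a b) (hy' : y ∈ openSegment ℝ a p) :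
    crossP (p - a) (b - a) = 0 := by
  obtain ⟨t, h0, h1, rfl⟩ := mem_open_iff.1 hy
  have := crossP_open hy'
  simp only [crossP, add_sub_cancel_left, Prod.smul_fst, Prod.smul_snd, smul_eq_mul] at this ⊢
  have h : t * ((p - a).1 * (b - a).2 - (p - a).2 * (b - a).1) = 0 := by linarith
  exact (mul_eq_zero.1 h).resolve_left (ne_of_gt h0)

/-- If `u` sees `v` and `w`, then it sees every vertex `p` of the triangle `uvw` that minimises a
linear form over the vertices of the triangle other than `u`, when the form is smaller at `u`:
a constraint crossing `up` would have to end in the triangle below the minimum. -/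
lemma Plane.sees_of_extreme {P : Set Pt} {S : Set (Pt × Pt)} (H : Plane P S) {u v w p : Pt}
    (hu : u ∈ P) (hv : v ∈ P) (hw : w ∈ P) (hp : p ∈ P) (huv : u ≠ v) (huw : u ≠ w)
    (hsv : CanSee S u v) (hsw : CanSee S u w) (hpT : p ∈ Tri u v w) (hpu : p ≠ u)
    (l : Pt →ₗ[ℝ] ℝ) (hl : ∀ q ∈ P, q ∈ Tri u v w → q ≠ u → l p ≤ l q) (hlu : l u < l p) :
    CanSee S u p := by
  by_cases hpv : p = v
  · rwa [hpv]
  by_cases hpw : p = w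
  · rwa [hpw]
  by_contra hcon
  simp only [CanSee, not_or, not_forall, not_not] at hcon
  obtain ⟨hn, c, hc, y, hyc, hy⟩ := hcon
  have hside := H.side hu hp hpu.symm hn hc hy hyc
  have hly : l y < l p := by
    obtain ⟨t, h0, h1, rfl⟩ := mem_open_iff.1 hy
    simp only [map_add, map_smul, map_sub, smul_eq_mul]
    nlinarith
  -- one endpoint of the constraint is at most as high as the crossing point
  have hz : ∃ z, (z = c.1 ∨ z = c.2) ∧ l z ≤ l y ∧ crossP (p - u) (z - u) ≠ 0 := by
    have hne := mul_ne_zero_iff.1 hside.ne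
    by_cases h1 : l c.1 ≤ l y
    · exact ⟨_, Or.inl rfl, h1, hne.1⟩
    · refine ⟨_, Or.inr rfl, ?_, hne.2⟩
      push Not at h1
      obtain ⟨s, s0, s1, rfl⟩ := mem_open_iff.1 hyc
      simp only [map_add, map_smul, map_sub, smul_eq_mul] at h1 ⊢
      nlinarith
  obtain ⟨z, hzc, hzl, hz0⟩ := hz
  have hzP : z ∈ P := by
    rcases hzc with rfl | rfl
    · exact (H.mem c hc).1
    · exact (H.mem c hc).2
  have main : ∀ Z ∈ P, u ≠ Z → Z ≠ p → CanSee S u Z → (∀ q, q ∈ Tri u Z p → q ∈ Tri u v w) →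
      ¬ (0 < crossP (p - u) (Z - u) * crossP (p - u) (z - u)) := by
    intro Z hZ huZ hZp hsZ hsub hpos
    have hlZ : l p ≤ l Z := hl Z hZ (hsub Z (Tri_X _ _ _)) huZ.symm
    rcases exit_tri hy hpos with hin | ⟨g, hg, hcase⟩
    · have hzu : z ≠ u := by rintro rfl; simp [crossP] at hz0
      have := hl z hzP (hsub z hin) hzu
      linarith
    · have hgl : l g < l p := by
        obtain ⟨t, h0, h1, rfl⟩ := mem_seg_iff.1 hg
        simp only [map_add, map_smul, map_sub, smul_eq_mul]
        nlinarith
      have hgc := sub_mem_seg hyc hzc hg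
      rcases hcase with h | h | h
      · have hyZ : y ∈ openSegment ℝ u Z := by
          rcases H.key hu hZ huZ hsZ hc h hgc with h | h
          · rw [h] at hyc; exact hyc
          · rw [h] at hyc; rw [openSegment_symm]; exact hyc
        have := crossP_open2 hyZ hy
        rw [this] at hpos; simp at hpos
      · rw [h] at hgl; linarith
      · obtain ⟨t, h0, h1, rfl⟩ := mem_open_iff.1 h
        simp only [map_add, map_smul, map_sub, smul_eq_mul] at hgl
        nlinarith
  have hv' := main v hv huv (Ne.symm hpv) hsv (fun q hq => Tri_sub hpT hq)
  have hw' := main w hw huw (Ne.symm hpw) hsw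
    (fun q hq => Tri_swap (Tri_sub (Tri_swap hpT) hq))
  have gv := H.gp u hu p hp v hv hpu.symm hpv huv
  have gw := H.gp u hu p hp w hw hpu.symm hpw huw
  obtain ⟨α, β, h1, h2, h3, hpe⟩ := hpT
  have hopp : α * crossP (p - u) (v - u) + β * crossP (p - u) (w - u) = 0 := by
    have : p - u = α • (v - u) + β • (w - u) := by rw [hpe]; abel
    rw [this]
    simp only [crossP, Prod.fst_add, Prod.snd_add, Prod.smul_fst, Prod.smul_snd, smul_eq_mul]
    ring
  have hα : 0 < α ∨ 0 < β := by
    by_contra hcon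
    push Not at hcon
    have e1 : α = 0 := le_antisymm hcon.1 h1
    have e2 : β = 0 := le_antisymm hcon.2 h2
    apply hpu; rw [hpe, e1, e2]; simp
  clear hpe
  push Not at hv' hw'
  generalize crossP (p - u) (v - u) = a at *
  generalize crossP (p - u) (w - u) = b at *
  generalize crossP (p - u) (z - u) = d at *
  have hprod : 0 < a * b := by
    have h1 : a * d < 0 := lt_of_le_of_ne hv' (mul_ne_zero gv hz0)
    have h2 : b * d < 0 := lt_of_le_of_ne hw' (mul_ne_zero gw hz0)
    nlinarith [mul_pos_of_neg_of_neg h1 h2, sq_nonneg d, mul_self_pos.2 hz0]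
  rcases pos_and_pos_or_neg_and_neg_of_mul_pos hprod with ⟨ha, hb⟩ | ⟨ha, hb⟩
  · rcases hα with h | h <;> nlinarith [mul_pos h ha, mul_pos h hb, mul_nonneg h1 ha.le, mul_nonneg h2 hb.le]
  · rcases hα with h | h <;> nlinarith [mul_neg_of_pos_of_neg h ha, mul_neg_of_pos_of_neg h hb, mul_nonpos_of_nonneg_of_nonpos h1 ha.le, mul_nonpos_of_nonneg_of_nonpos h2 hb.le]

/-! ### Visibility across an empty triangle and across a crossing -/

lemma Plane.no_mid {P : Set Pt} {S : Set (Pt × Pt)} (H : Plane P S) {a b z : Pt} (ha : a ∈ P)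
    (hb : b ∈ P) (hz : z ∈ P) (hab : a ≠ b) : z ∉ openSegment ℝ a b := by
  intro h
  refine H.gp a ha b hb z hz hab ?_ ?_ (crossP_open h)
  · rintro rfl; exact (not_mem_open hab).2 h
  · rintro rfl; exact (not_mem_open hab).1 h

lemma Tri_rot {O X Y q : Pt} (h : q ∈ Tri O X Y) : q ∈ Tri X O Y := by
  obtain ⟨α, β, h1, h2, h3, rfl⟩ := h
  refine ⟨1 - α - β, β, by linarith, h2, by linarith, ?_⟩
  ext
  · simp only [Prod.fst_add, Prod.smul_fst, Prod.fst_sub, smul_eq_mul]; ring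
  · simp only [Prod.snd_add, Prod.smul_snd, Prod.snd_sub, smul_eq_mul]; ring

/-- If `u` sees `v` and `p`, the triangle `uvp` contains no further vertex, and no constraint at
`u` enters it, then `v` sees `p`. -/
lemma Plane.sees_across {P : Set Pt} {S : Set (Pt × Pt)} (H : Plane P S) {u v p : Pt}
    (hu : u ∈ P) (hv : v ∈ P) (hp : p ∈ P) (huv : u ≠ v) (hup : u ≠ p) (hvp : v ≠ p)
    (hsv : CanSee S u v) (hsp : CanSee S u p)
    (hemp : ∀ q ∈ P, q ∈ Tri u v p → q = u ∨ q = v ∨ q = p)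
    (hcon : ∀ z, Constr S u z →
      ¬ ∃ s t : ℝ, 0 < s ∧ 0 < t ∧ z - u = s • (v - u) + t • (p - u)) :
    CanSee S v p := by
  by_contra hnot
  simp only [CanSee, not_or, not_forall, not_not] at hnot
  obtain ⟨hn, c, hc, y, hyc, hy⟩ := hnot
  have hside := H.side hv hp hvp hn hc hy hyc
  have hX : crossP (p - v) (u - v) ≠ 0 := H.gp v hv p hp u hu hvp hup.symm huv.symm
  have hX' : crossP (u - v) (p - v) ≠ 0 := H.gp v hv u hu p hp huv.symm hup hvp
  have hX2 : crossP (v - p) (u - p) ≠ 0 := H.gp p hp v hv u hu hvp.symm huv.symm hup.symm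
  have hmem := H.mem c hc
  have hc12 : c.1 ≠ c.2 := by
    intro h; rw [h] at hside; nlinarith [mul_self_nonneg (crossP (p - v) (c.2 - v))]
  have hz : ∃ z, (z = c.1 ∨ z = c.2) ∧ 0 < crossP (p - v) (u - v) * crossP (p - v) (z - v) := by
    by_contra hcon2
    push Not at hcon2
    have h1 := hcon2 c.1 (Or.inl rfl)
    have h2 := hcon2 c.2 (Or.inr rfl)
    have h12 := mul_nonneg_of_nonpos_of_nonpos h1 h2
    have : 0 < crossP (p - v) (u - v) * crossP (p - v) (u - v) := mul_self_pos.2 hX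
    nlinarith
  obtain ⟨z, hzc, hz0⟩ := hz
  have hzP : z ∈ P := by
    rcases hzc with rfl | rfl
    · exact hmem.1
    · exact hmem.2
  have hu_end : u = c.1 ∨ u = c.2 := by
    rcases exit_tri hy hz0 with hin | ⟨g, hg, hcase⟩
    · rcases hemp z hzP (Tri_rot hin) with h | h | h
      · rw [← h]; exact hzc
      · rw [h] at hz0; simp [crossP] at hz0
      · rw [h] at hz0
        have : crossP (p - v) (p - v) = 0 := by simp only [crossP]; ring
        rw [this] at hz0; simp at hz0
    · have hgc := sub_mem_seg hyc hzc hg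
      rcases hcase with h | h | h
      · rw [openSegment_symm] at h
        have hyy : y ∈ openSegment ℝ v u := by
          rcases H.key hu hv huv hsv hc h hgc with h | h
          · rw [h] at hyc; rw [openSegment_symm]; exact hyc
          · rw [h] at hyc; exact hyc
        exact absurd (crossP_open2 hyy hy) hX
      · rw [h] at hgc
        by_contra hne
        push Not at hne
        exact H.no_mid hmem.1 hmem.2 hu hc12
          (mem_openSegment_of_ne_left_right hne.1.symm hne.2.symm hgc)
      · have hyy : y ∈ openSegment ℝ p u := by
          rcases H.key hu hp hup hsp hc h hgc with h | h
          · rw [h] at hyc; rw [openSegment_symm]; exact hyc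
          · rw [h] at hyc; exact hyc
        rw [openSegment_symm] at hy
        exact absurd (crossP_open2 hyy hy) hX2
  have hfin : ∃ z2, Constr S u z2 ∧ y ∈ openSegment ℝ u z2 := by
    rcases hu_end with h | h
    · refine ⟨c.2, Or.inl ?_, ?_⟩
      · rw [h]; exact hc
      · rw [h]; exact hyc
    · refine ⟨c.1, Or.inr ?_, ?_⟩
      · rw [h]; exact hc
      · rw [h, openSegment_symm]; exact hyc
  obtain ⟨z2, hcz, hyz⟩ := hfin
  obtain ⟨s, s0, s1, hs⟩ := mem_open_iff.1 hyz
  obtain ⟨t, t0, t1, ht⟩ := mem_open_iff.1 hy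
  refine hcon z2 hcz ⟨(1 - t) / s, t / s, div_pos (by linarith) s0, by positivity, ?_⟩
  rw [ht] at hs
  have e : s • (z2 - u) = (1 - t) • (v - u) + t • (p - u) := by
    have e0 : s • (z2 - u) = v + t • (p - v) - u := by rw [hs]; abel
    rw [e0]; ext
    · simp only [Prod.fst_add, Prod.smul_fst, Prod.fst_sub, smul_eq_mul]; ring
    · simp only [Prod.snd_add, Prod.smul_snd, Prod.snd_sub, smul_eq_mul]; ring
  have : z2 - u = s⁻¹ • (s • (z2 - u)) := by rw [smul_smul, inv_mul_cancel₀ s0.ne', one_smul]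
  rw [this, e, smul_add, smul_smul, smul_smul]
  congr 2 <;> ring_nf

/-- If `u` sees `w`, `v` sees `r`, and `uw` crosses `vr` at `x`, then some vertex `q ≠ u` of the
triangle `uxr` off the line `uw` is visible from `u`, and no constraint at `u` lies between `w`
and `q`: take the vertex whose direction from `u` is closest to that of `w`. -/
lemma Plane.exists_visible {P : Set Pt} {S : Set (Pt × Pt)} (H : Plane P S) (hfin : P.Finite)
    {u v w r x : Pt} (hu : u ∈ P) (hv : v ∈ P) (hw : w ∈ P) (hr : r ∈ P)
    (huv : u ≠ v) (huw : u ≠ w) (hur : u ≠ r) (hvr : v ≠ r)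
    (hsw : CanSee S u w) (hsr : CanSee S v r)
    (hxw : x ∈ openSegment ℝ u w) (hxr : x ∈ openSegment ℝ v r)
    (hD : crossP (x - u) (r - u) ≠ 0) :
    ∃ q ∈ P, CanSee S u q ∧
      (∃ α β : ℝ, 0 ≤ α ∧ 0 < β ∧ α + β ≤ 1 ∧ q = u + α • (x - u) + β • (r - u)) ∧
      ∀ z, Constr S u z →
        ¬ ∃ s t : ℝ, 0 < s ∧ 0 < t ∧ z - u = s • (w - u) + t • (q - u) := by
  classical
  -- coordinates with respect to `x - u`, `r - u`
  set a : Pt → ℝ := fun q => crossP (q - u) (r - u) / crossP (x - u) (r - u) with ha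
  set b : Pt → ℝ := fun q => crossP (x - u) (q - u) / crossP (x - u) (r - u) with hb
  have hab : ∀ q, q = u + a q • (x - u) + b q • (r - u) := by
    intro q
    have := cramer hD (q - u)
    rw [add_assoc, ← this]; abel
  have hco : ∀ α β : ℝ, a (u + α • (x - u) + β • (r - u)) = α ∧
      b (u + α • (x - u) + β • (r - u)) = β := by
    intro α β
    constructor
    · simp only [ha]
      rw [div_eq_iff hD]
      simp only [crossP, Prod.fst_add, Prod.snd_add, Prod.smul_fst, Prod.smul_snd, Prod.fst_sub,
        Prod.snd_sub, smul_eq_mul]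
      ring
    · simp only [hb]
      rw [div_eq_iff hD]
      simp only [crossP, Prod.fst_add, Prod.snd_add, Prod.smul_fst, Prod.smul_snd, Prod.fst_sub,
        Prod.snd_sub, smul_eq_mul]
      ring
  have hrr := hco 0 1
  simp only [zero_smul, one_smul, add_zero, add_sub_cancel] at hrr
  clear_value a b
  obtain ⟨q, ⟨hqP, hqa, hqb, hqs⟩, hqmin⟩ := Set.exists_min_image
    {q | q ∈ P ∧ 0 ≤ a q ∧ 0 < b q ∧ a q + b q ≤ 1} (fun q => b q / (a q + b q))
    (hfin.subset fun q h => h.1) ⟨r, hr, by rw [hrr.1], by rw [hrr.2]; norm_num,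
      by rw [hrr.1, hrr.2]; norm_num⟩
  have hmin : ∀ z ∈ P, 0 ≤ a z → 0 < b z → a z + b z ≤ 1 → b q * a z ≤ b z * a q := by
    intro z h1 h2 h3 h4
    have : b q / (a q + b q) ≤ b z / (a z + b z) := hqmin z ⟨h1, h2, h3, h4⟩
    rw [div_le_div_iff₀ (by linarith) (by linarith)] at this
    linarith
  obtain ⟨lam, l0, l1, hlam⟩ := mem_open_iff.1 hxw
  obtain ⟨τ, τ0, τ1, hτ⟩ := mem_open_iff.1 hxr
  have hxu : x - u = lam • (w - u) := by rw [hlam]; simp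
  -- the open segment from `x` to `r` is part of `vr`
  have hsubvr : ∀ σ : ℝ, 0 ≤ σ → σ < 1 → x + σ • (r - x) ∈ openSegment ℝ v r := by
    intro σ h0 h1
    refine mem_open_iff.2 ⟨τ + σ * (1 - τ), by nlinarith, by nlinarith, ?_⟩
    rw [hτ]; ext
    · simp only [Prod.fst_add, Prod.smul_fst, Prod.fst_sub, smul_eq_mul]; ring
    · simp only [Prod.snd_add, Prod.smul_snd, Prod.snd_sub, smul_eq_mul]; ring
  have hsubuw : ∀ g, g ∈ openSegment ℝ u x ∨ g = x → g ∈ openSegment ℝ u w := by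
    rintro g (h | h)
    · obtain ⟨t, t0, t1, rfl⟩ := mem_open_iff.1 h
      exact mem_open_iff.2 ⟨t * lam, by positivity, by nlinarith, by rw [hxu, smul_smul]⟩
    · rw [h]; exact hxw
  have hqu : q - u = a q • (x - u) + b q • (r - u) := by
    nth_rewrite 1 [hab q]; abel
  have hqu0 : u ≠ q := by
    rintro rfl
    have := hqu
    have h2 := hco 0 0
    simp only [zero_smul, add_zero] at h2
    rw [h2.2] at hqb; exact lt_irrefl _ hqb
  have hqw : crossP (q - u) (w - u) ≠ 0 := by
    have e : lam * crossP (q - u) (w - u) = - (b q * crossP (x - u) (r - u)) := by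
      have : lam * crossP (q - u) (w - u) = crossP (q - u) (lam • (w - u)) := by
        simp only [crossP, Prod.smul_fst, Prod.smul_snd, smul_eq_mul]; ring
      rw [this, ← hxu, hqu]
      simp only [crossP, Prod.fst_add, Prod.snd_add, Prod.smul_fst, Prod.smul_snd, smul_eq_mul]
      ring
    intro h
    rw [h] at e
    have : b q * crossP (x - u) (r - u) ≠ 0 := mul_ne_zero hqb.ne' hD
    apply this; linarith
  refine ⟨q, hqP, ?_, ⟨a q, b q, hqa, hqb, hqs, hab q⟩, ?_⟩
  · by_contra hcon
    simp only [CanSee, not_or, not_forall, not_not] at hcon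
    obtain ⟨hn, c, hc, y, hyc, hy⟩ := hcon
    have hside := H.side hu hqP hqu0 hn hc hy hyc
    have hX : crossP (q - u) (x - u) ≠ 0 := by
      have : crossP (q - u) (x - u) = lam * crossP (q - u) (w - u) := by
        rw [hxu]; simp only [crossP, Prod.smul_fst, Prod.smul_snd, smul_eq_mul]; ring
      rw [this]; exact mul_ne_zero l0.ne' hqw
    have hz : ∃ z, (z = c.1 ∨ z = c.2) ∧
        0 < crossP (q - u) (x - u) * crossP (q - u) (z - u) := by
      by_contra hcon2
      push Not at hcon2
      have h12 := mul_nonneg_of_nonpos_of_nonpos (hcon2 c.1 (Or.inl rfl)) (hcon2 c.2 (Or.inr rfl))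
      have : 0 < crossP (q - u) (x - u) * crossP (q - u) (x - u) := mul_self_pos.2 hX
      nlinarith
    obtain ⟨z, hzc, hz0⟩ := hz
    have hzP : z ∈ P := by
      rcases hzc with rfl | rfl
      · exact (H.mem c hc).1
      · exact (H.mem c hc).2
    -- `Y` is the point where the ray from `u` through `q` meets `vr`
    set m := a q + b q with hm
    have hm0 : 0 < m := by rw [hm]; linarith
    set Y := u + m⁻¹ • (q - u) with hY
    have hYu : Y - u = m⁻¹ • (q - u) := by rw [hY]; simp
    have hquY : q - u = m • (Y - u) := by
      rw [hYu, smul_smul, mul_inv_cancel₀ hm0.ne', one_smul]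
    have hYx : Y = x + (b q / m) • (r - x) := by
      have h1 : a q / m = 1 - b q / m := by rw [eq_sub_iff_add_eq, ← add_div, ← hm, div_self hm0.ne']
      have : Y = u + (a q / m) • (x - u) + (b q / m) • (r - u) := by
        rw [hY, hqu, smul_add, smul_smul, smul_smul, add_assoc]
        congr 3 <;> ring
      rw [this, h1]; ext
      · simp only [Prod.fst_add, Prod.smul_fst, Prod.fst_sub, smul_eq_mul]; ring
      · simp only [Prod.snd_add, Prod.smul_snd, Prod.snd_sub, smul_eq_mul]; ring
    have hσ0 : 0 < b q / m := by positivity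
    have hσ1 : b q / m ≤ 1 := by rw [div_le_one hm0]; linarith
    have hyY : y ∈ openSegment ℝ u Y := by
      obtain ⟨t, t0, t1, rfl⟩ := mem_open_iff.1 hy
      exact mem_open_iff.2 ⟨t * m, by positivity, by nlinarith, by rw [hquY, smul_smul]⟩
    have hpos : 0 < crossP (Y - u) (x - u) * crossP (Y - u) (z - u) := by
      have e : ∀ k, crossP (Y - u) k = m⁻¹ * crossP (q - u) k := by
        intro k; rw [hYu]; simp only [crossP, Prod.smul_fst, Prod.smul_snd, smul_eq_mul]; ring
      rw [e, e]
      have : 0 < m⁻¹ := by positivity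
      have := mul_pos this this
      nlinarith
    -- the constraint cannot meet `uw`
    have nouw : ∀ g ∈ segment ℝ c.1 c.2, g ∉ openSegment ℝ u w := by
      intro g hg hgo
      have hyw : y ∈ openSegment ℝ u w := by
        rcases H.key hu hw huw hsw hc hgo hg with h | h
        · rw [h] at hyc; exact hyc
        · rw [h] at hyc; rw [openSegment_symm]; exact hyc
      exact hqw (crossP_open2 hyw hy)
    have hzseg : z ∈ segment ℝ c.1 c.2 := by
      rcases hzc with rfl | rfl
      · exact left_mem_segment _ _ _
      · exact right_mem_segment _ _ _
    rcases exit_tri hyY hpos with ⟨α, β, h1, h2, h3, hze⟩ | ⟨g, hg, hcase⟩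
    · have hYr : Y - u = (1 - b q / m) • (x - u) + (b q / m) • (r - u) := by
        rw [hYx]; ext
        · simp only [Prod.fst_add, Prod.smul_fst, Prod.fst_sub, smul_eq_mul]; ring
        · simp only [Prod.snd_add, Prod.smul_snd, Prod.snd_sub, smul_eq_mul]; ring
      have hze' : z = u + (α + β * (1 - b q / m)) • (x - u) + (β * (b q / m)) • (r - u) := by
        rw [hze, hYr]; ext
        · simp only [Prod.fst_add, Prod.smul_fst, Prod.fst_sub, smul_eq_mul]; ring
        · simp only [Prod.snd_add, Prod.smul_snd, Prod.snd_sub, smul_eq_mul]; ring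
      have hα : 0 < α := by
        rcases h1.lt_or_eq with h | h
        · exact h
        · exfalso
          rw [← h, zero_smul, add_zero] at hze
          have : crossP (q - u) (z - u) = 0 := by
            rw [hze, hquY]
            simp only [crossP, Prod.smul_fst, Prod.smul_snd, smul_eq_mul, add_sub_cancel_left]
            ring
          rw [this] at hz0; simp at hz0
      rcases h2.lt_or_eq with hβ | hβ
      · have hc2 := hco (α + β * (1 - b q / m)) (β * (b q / m))
        rw [← hze'] at hc2
        have h1' : 0 ≤ β * (1 - b q / m) := mul_nonneg hβ.le (by linarith)
        have := hmin z hzP (by rw [hc2.1]; linarith) (by rw [hc2.2]; positivity)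
          (by rw [hc2.1, hc2.2]; nlinarith)
        rw [hc2.1, hc2.2] at this
        have e1 : b q = m * (b q / m) := by field_simp
        have e2 : a q = m * (1 - b q / m) := by rw [mul_sub, ← e1, hm]; ring
        rw [e2] at this
        nth_rewrite 1 [e1] at this
        have : m * (b q / m) * α ≤ 0 := by nlinarith
        have : 0 < m * (b q / m) * α := by positivity
        linarith
      · rw [← hβ, zero_smul, add_zero] at hze
        refine nouw z hzseg (hsubuw z ?_)
        rcases (show α ≤ 1 by linarith).lt_or_eq with h | h
        · left; exact mem_open_iff.2 ⟨α, hα, h, hze⟩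
        · right; rw [hze, h]; simp
    · have hgc := sub_mem_seg hyc hzc hg
      rcases hcase with h | h | h
      · exact nouw g hgc (hsubuw g (Or.inl h))
      · exact nouw g hgc (hsubuw g (Or.inr h))
      · have hgvr : g ∈ openSegment ℝ v r := by
          obtain ⟨t, t0, t1, rfl⟩ := mem_open_iff.1 h
          have : x + t • (Y - x) = x + (t * (b q / m)) • (r - x) := by
            rw [hYx, add_sub_cancel_left, smul_smul]
          rw [this]; exact hsubvr _ (by positivity) (by nlinarith)
        have hyvr : y ∈ openSegment ℝ v r := by
          rcases H.key hv hr hvr hsr hc hgvr hgc with h | h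
          · rw [h] at hyc; exact hyc
          · rw [h] at hyc; rw [openSegment_symm]; exact hyc
        -- `y` is on `vr` and strictly before it on the ray `uY`
        obtain ⟨t, t0, t1, ht⟩ := mem_open_iff.1 hy
        obtain ⟨s, s0, s1, hs⟩ := mem_open_iff.1 hyvr
        have e1 := hco (t * a q) (t * b q)
        have e2 : y = u + (t * a q) • (x - u) + (t * b q) • (r - u) := by
          rw [ht, hqu, smul_add, smul_smul, smul_smul]; abel
        rw [← e2] at e1
        have hτ' : v - u = (1 - τ)⁻¹ • ((x - u) - τ • (r - u)) := by
          have h1τ : 1 - τ ≠ 0 := by linarith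
          have : (x - u) - τ • (r - u) = (1 - τ) • (v - u) := by
            rw [hτ]; ext
            · simp only [Prod.fst_add, Prod.smul_fst, Prod.fst_sub, smul_eq_mul]; ring
            · simp only [Prod.snd_add, Prod.smul_snd, Prod.snd_sub, smul_eq_mul]; ring
          rw [this, smul_smul, inv_mul_cancel₀ h1τ, one_smul]
        have h1τ : 0 < 1 - τ := by linarith
        have e3 : y = u + ((1 - s) * (1 - τ)⁻¹) • (x - u)
            + (s - (1 - s) * (1 - τ)⁻¹ * τ) • (r - u) := by
          have : y = u + (1 - s) • (v - u) + s • (r - u) := by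
            rw [hs]; ext
            · simp only [Prod.fst_add, Prod.smul_fst, Prod.fst_sub, smul_eq_mul]; ring
            · simp only [Prod.snd_add, Prod.smul_snd, Prod.snd_sub, smul_eq_mul]; ring
          rw [this, hτ']; ext
          · simp only [Prod.fst_add, Prod.smul_fst, Prod.fst_sub, smul_eq_mul]; ring
          · simp only [Prod.snd_add, Prod.smul_snd, Prod.snd_sub, smul_eq_mul]; ring
        have e4 := hco ((1 - s) * (1 - τ)⁻¹) (s - (1 - s) * (1 - τ)⁻¹ * τ)
        rw [← e3] at e4
        have hsum : a y + b y = 1 := by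
          rw [e4.1, e4.2]; field_simp; ring
        rw [e1.1, e1.2, ← mul_add, ← hm] at hsum
        nlinarith
  · rintro z hcz ⟨s, t, s0, t0, hzq⟩
    have hzP : z ∈ P := by
      rcases hcz with h | h
      · exact (H.mem _ h).2
      · exact (H.mem _ h).1
    have hwu : w - u = lam⁻¹ • (x - u) := by
      rw [hxu, smul_smul, inv_mul_cancel₀ l0.ne', one_smul]
    have hze : z = u + (s * lam⁻¹ + t * a q) • (x - u) + (t * b q) • (r - u) := by
      have : z = u + (z - u) := by abel
      rw [this, hzq, hwu, hqu]; ext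
      · simp only [Prod.fst_add, Prod.smul_fst, Prod.fst_sub, smul_eq_mul]; ring
      · simp only [Prod.snd_add, Prod.smul_snd, Prod.snd_sub, smul_eq_mul]; ring
    have hc2 := hco (s * lam⁻¹ + t * a q) (t * b q)
    rw [← hze] at hc2
    have hsl : 0 < s * lam⁻¹ := by positivity
    have hta : 0 ≤ t * a q := by positivity
    have htb : 0 < t * b q := by positivity
    by_cases hsum : a z + b z ≤ 1
    · have := hmin z hzP (by rw [hc2.1]; linarith) (by rw [hc2.2]; exact htb) hsum
      rw [hc2.1, hc2.2] at this
      nlinarith [mul_pos hqb hsl]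
    · push Not at hsum
      set n := a z + b z with hn
      have hn0 : 0 < n := by linarith
      have hgz : u + n⁻¹ • (z - u) ∈ openSegment ℝ u z :=
        mem_open_iff.2 ⟨n⁻¹, by positivity, inv_lt_one_of_one_lt₀ hsum, rfl⟩
      have hgvr : u + n⁻¹ • (z - u) ∈ openSegment ℝ v r := by
        have : u + n⁻¹ • (z - u) = x + (b z / n) • (r - x) := by
          have h1 : a z / n = 1 - b z / n := by
            rw [eq_sub_iff_add_eq, ← add_div, ← hn, div_self hn0.ne']
          have h2 : z - u = a z • (x - u) + b z • (r - u) := by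
            nth_rewrite 1 [hab z]; abel
          have : u + n⁻¹ • (z - u) = u + (a z / n) • (x - u) + (b z / n) • (r - u) := by
            rw [h2, smul_add, smul_smul, smul_smul, add_assoc]
            congr 3 <;> ring
          rw [this, h1]; ext
          · simp only [Prod.fst_add, Prod.smul_fst, Prod.fst_sub, smul_eq_mul]; ring
          · simp only [Prod.snd_add, Prod.smul_snd, Prod.snd_sub, smul_eq_mul]; ring
        rw [this]
        have hbz : 0 < b z := by rw [hc2.2]; exact htb
        have haz : 0 < a z := by rw [hc2.1]; linarith
        refine hsubvr _ (by positivity) ?_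
        rw [div_lt_one hn0]; linarith
      rcases hcz with h | h
      · rcases H.key hv hr hvr hsr h hgvr (openSegment_subset_segment _ _ _ hgz) with h | h
        · exact huv (congrArg Prod.fst h)
        · exact hur (congrArg Prod.fst h)
      · rcases H.key hv hr hvr hsr h hgvr (by
          rw [segment_symm]; exact openSegment_subset_segment _ _ _ hgz) with h | h
        · exact hur (congrArg Prod.snd h)
        · exact huv (congrArg Prod.snd h)

/-! ### Cone coordinates and walks -/

/-- The linear form measuring height in the direction of the bisector of the positive cone `i`.
The three forms add up to zero, and the positive cone `i` is where the other two are negative. -/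
def E (i : ℕ) : Pt →ₗ[ℝ] ℝ :=
  Real.sin (-(2 * Real.pi * i / 3)) • LinearMap.fst ℝ ℝ ℝ +
    Real.cos (-(2 * Real.pi * i / 3)) • LinearMap.snd ℝ ℝ ℝ

/-- `i`, `j`, `k` are the three cone indices, in some order. -/
def Tr (i j k : ℕ) : Prop := i < 3 ∧ j < 3 ∧ k < 3 ∧ i ≠ j ∧ j ≠ k ∧ i ≠ k

lemma Tr.swap {i j k : ℕ} (h : Tr i j k) : Tr i k j :=
  ⟨h.1, h.2.2.1, h.2.1, h.2.2.2.2.2, h.2.2.2.2.1.symm, h.2.2.2.1⟩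

lemma Tr.cyc {i j k : ℕ} (h : Tr i j k) : Tr j k i :=
  ⟨h.2.1, h.2.2.1, h.1, h.2.2.2.2.1, h.2.2.2.2.2.symm, h.2.2.2.1.symm⟩

lemma Tr.exists {i : ℕ} (h : i < 3) : ∃ j k, Tr i j k := by
  interval_cases i
  · exact ⟨1, 2, by simp [Tr]⟩
  · exact ⟨2, 0, by simp [Tr]⟩
  · exact ⟨0, 1, by simp [Tr]⟩

lemma Tr.cases {i j k : ℕ} (h : Tr i j k) : (i = 0 ∧ j = 1 ∧ k = 2) ∨ (i = 0 ∧ j = 2 ∧ k = 1) ∨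
    (i = 1 ∧ j = 2 ∧ k = 0) ∨ (i = 1 ∧ j = 0 ∧ k = 2) ∨ (i = 2 ∧ j = 0 ∧ k = 1) ∨
    (i = 2 ∧ j = 1 ∧ k = 0) := by
  obtain ⟨h1, h2, h3, h4, h5, h6⟩ := h
  omega

lemma E0 (p : Pt) : E 0 p = p.2 := by simp [E]

lemma trig1 : Real.sin (-(2 * Real.pi * (1 : ℕ) / 3)) = -(√3 / 2) ∧
    Real.cos (-(2 * Real.pi * (1 : ℕ) / 3)) = -(1 / 2) := by
  have e : (2 * Real.pi * (1 : ℕ) / 3 : ℝ) = Real.pi - Real.pi / 3 := by push_cast; ring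
  rw [Real.sin_neg, Real.cos_neg, e, Real.sin_pi_sub, Real.cos_pi_sub]
  simp

lemma trig2 : Real.sin (-(2 * Real.pi * (2 : ℕ) / 3)) = √3 / 2 ∧
    Real.cos (-(2 * Real.pi * (2 : ℕ) / 3)) = -(1 / 2) := by
  have e : (2 * Real.pi * (2 : ℕ) / 3 : ℝ) = Real.pi / 3 + Real.pi := by push_cast; ring
  rw [Real.sin_neg, Real.cos_neg, e, Real.sin_add_pi, Real.cos_add_pi]
  simp

lemma E1 (p : Pt) : E 1 p = -(√3 / 2) * p.1 - p.2 / 2 := by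
  simp only [E, LinearMap.add_apply, LinearMap.smul_apply, LinearMap.fst_apply,
    LinearMap.snd_apply, smul_eq_mul, trig1]
  ring

lemma E2 (p : Pt) : E 2 p = √3 / 2 * p.1 - p.2 / 2 := by
  simp only [E, LinearMap.add_apply, LinearMap.smul_apply, LinearMap.fst_apply,
    LinearMap.snd_apply, smul_eq_mul, trig2]
  ring

lemma projLen_eq (i : ℕ) (u p : Pt) : projLen i u p = E i (p - u) := by
  simp [projLen, rel, rot, E]

lemma rel_snd (i : ℕ) (u p : Pt) : (rel i u p).2 = E i (p - u) := projLen_eq i u p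

lemma sq3 : √3 * √3 = 3 := Real.mul_self_sqrt (by norm_num)

lemma Tr.sum {i j k : ℕ} (h : Tr i j k) (p : Pt) : E i p = -E j p - E k p := by
  rcases h.cases with ⟨rfl, rfl, rfl⟩ | ⟨rfl, rfl, rfl⟩ | ⟨rfl, rfl, rfl⟩ | ⟨rfl, rfl, rfl⟩ |
    ⟨rfl, rfl, rfl⟩ | ⟨rfl, rfl, rfl⟩ <;> simp only [E0, E1, E2] <;> ring

lemma Tr.rel_fst {i j k : ℕ} (h : Tr i j k) (u p : Pt) :
    √3 * |(rel i u p).1| = |E j (p - u) - E k (p - u)| := by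
  have key : √3 * (rel i u p).1 = E j (p - u) - E k (p - u) ∨
      √3 * (rel i u p).1 = -(E j (p - u) - E k (p - u)) := by
    have r0 : (rel 0 u p).1 = (p - u).1 := by simp [rel, rot]
    have r1 : (rel 1 u p).1 = -(1 / 2) * (p - u).1 + √3 / 2 * (p - u).2 := by
      simp only [rel, rot, trig1]; ring
    have r2 : (rel 2 u p).1 = -(1 / 2) * (p - u).1 - √3 / 2 * (p - u).2 := by
      simp only [rel, rot, trig2]
    have h3 := sq3
    rcases h.cases with ⟨rfl, rfl, rfl⟩ | ⟨rfl, rfl, rfl⟩ | ⟨rfl, rfl, rfl⟩ | ⟨rfl, rfl, rfl⟩ |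
      ⟨rfl, rfl, rfl⟩ | ⟨rfl, rfl, rfl⟩ <;> simp only [E0, E1, E2, r0, r1, r2]
    · right; ring
    · left; ring
    · right; linear_combination (p - u).2 / 2 * h3
    · left; linear_combination (p - u).2 / 2 * h3
    · right; linear_combination (-(p - u).2 / 2) * h3
    · left; linear_combination (-(p - u).2 / 2) * h3
  have h0 : √3 * |(rel i u p).1| = |√3 * (rel i u p).1| := by
    rw [abs_mul, abs_of_nonneg (Real.sqrt_nonneg 3)]
  rw [h0]
  rcases key with h | h <;> rw [h]
  rw [abs_neg]

lemma Tr.inPos_iff {i j k : ℕ} (h : Tr i j k) (u p : Pt) :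
    inPos i u p ↔ E j (p - u) < 0 ∧ E k (p - u) < 0 := by
  rw [inPos, h.rel_fst, rel_snd, h.sum, abs_lt]
  constructor
  · rintro ⟨h1, h2⟩; constructor <;> linarith
  · rintro ⟨h1, h2⟩; constructor <;> linarith

lemma Tr.closed_iff {i j k : ℕ} (h : Tr i j k) (u p : Pt) :
    √3 * |(rel i u p).1| ≤ (rel i u p).2 ↔ E j (p - u) ≤ 0 ∧ E k (p - u) ≤ 0 := by
  rw [h.rel_fst, rel_snd, h.sum, abs_le]
  constructor
  · rintro ⟨h1, h2⟩; constructor <;> linarith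
  · rintro ⟨h1, h2⟩; constructor <;> linarith

/-- The law of cosines for the 60° angle between the two boundary rays of the cone. -/
lemma Tr.dst_eq {i j k : ℕ} (h : Tr i j k) (u p : Pt) :
    dst u p = 2 / √3 * √(E j (p - u) ^ 2 + E j (p - u) * E k (p - u) + E k (p - u) ^ 2) := by
  have h3 : (2 / √3) ^ 2 = 4 / 3 := by rw [div_pow, Real.sq_sqrt (by norm_num)]; norm_num
  have h0 : (0 : ℝ) ≤ 2 / √3 := by positivity
  rw [dst, ← Real.sqrt_sq h0, h3, ← Real.sqrt_mul (by norm_num)]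
  congr 1
  have h3 := sq3
  rcases h.cases with ⟨rfl, rfl, rfl⟩ | ⟨rfl, rfl, rfl⟩ | ⟨rfl, rfl, rfl⟩ | ⟨rfl, rfl, rfl⟩ |
    ⟨rfl, rfl, rfl⟩ | ⟨rfl, rfl, rfl⟩ <;> simp only [E0, E1, E2, Prod.fst_sub, Prod.snd_sub] <;>
    linear_combination (-(p.1 - u.1) ^ 2 / 3) * h3

/-- Antisymmetric product in the coordinates given by two of the three forms. -/
def cr (j k : ℕ) (p q : Pt) : ℝ := E j p * E k q - E k p * E j q

/-- `cr j k` is the cross product up to a nonzero factor, whose sign depends on the order of the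
indices. -/
lemma Tr.crossP_eq {i j k : ℕ} (h : Tr i j k) :
    ∃ κ : ℝ, κ ≠ 0 ∧ ∀ p q, crossP p q = κ * cr j k p q := by
  have h3 := sq3
  have hne : √3 ≠ 0 := by positivity
  have hne' : 2 / √3 ≠ 0 := by positivity
  rcases h.cases with ⟨rfl, rfl, rfl⟩ | ⟨rfl, rfl, rfl⟩ | ⟨rfl, rfl, rfl⟩ | ⟨rfl, rfl, rfl⟩ |
    ⟨rfl, rfl, rfl⟩ | ⟨rfl, rfl, rfl⟩
  · exact ⟨2 / √3, hne', fun p q => by simp only [cr, crossP, E1, E2]; field_simp; ring⟩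
  · exact ⟨-(2 / √3), neg_ne_zero.2 hne', fun p q => by
      simp only [cr, crossP, E1, E2]; field_simp; ring⟩
  · exact ⟨2 / √3, hne', fun p q => by simp only [cr, crossP, E0, E2]; field_simp; ring⟩
  · exact ⟨-(2 / √3), neg_ne_zero.2 hne', fun p q => by
      simp only [cr, crossP, E0, E2]; field_simp; ring⟩
  · exact ⟨2 / √3, hne', fun p q => by simp only [cr, crossP, E0, E1]; field_simp; ring⟩
  · exact ⟨-(2 / √3), neg_ne_zero.2 hne', fun p q => by
      simp only [cr, crossP, E0, E1]; field_simp; ring⟩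

/-- `Wk R K u w l`: there is an `R`-path from `u` to `w` through points of `K`, of Euclidean
length at most `l`. -/
inductive Wk (R : Pt → Pt → Prop) (K : Set Pt) : Pt → Pt → ℝ → Prop
  | nil (u : Pt) (l : ℝ) (hu : u ∈ K) (hl : 0 ≤ l) : Wk R K u u l
  | cons (u v w : Pt) (l l' : ℝ) (he : R u v) (hu : u ∈ K) (h : Wk R K v w l)
      (hl : dst u v + l ≤ l') : Wk R K u w l'

lemma dst_comm (p q : Pt) : dst p q = dst q p := by
  rw [dst, dst]; congr 1; ring

lemma Wk.mono {R : Pt → Pt → Prop} {K K' : Set Pt} {u w : Pt} {l l' : ℝ} (h : Wk R K u w l)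
    (hK : K ⊆ K') (hl : l ≤ l') : Wk R K' u w l' := by
  induction h generalizing l' with
  | nil u l hu hl0 => exact .nil u l' (hK hu) (by linarith)
  | cons u v w l m he hu h hl2 ih => exact .cons u v w l l' he (hK hu) (ih le_rfl) (by linarith)

lemma Wk.trans {R : Pt → Pt → Prop} {K : Set Pt} {u v w : Pt} {l l' : ℝ} (h : Wk R K u v l)
    (h' : Wk R K v w l') : Wk R K u w (l + l') := by
  induction h with
  | nil u l hu hl0 => exact h'.mono le_rfl (by linarith)
  | cons u v w l m he hu h hl2 ih => exact .cons u v _ _ _ he hu (ih h') (by linarith)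

lemma Wk.single {R : Pt → Pt → Prop} {K : Set Pt} {u v : Pt} (h : R u v) (hu : u ∈ K)
    (hv : v ∈ K) {l : ℝ} (hl : dst u v ≤ l) : Wk R K u v l :=
  .cons u v v 0 l h hu (.nil v 0 hv le_rfl) (by linarith)

lemma Wk.left_mem {R : Pt → Pt → Prop} {K : Set Pt} {u w : Pt} {l : ℝ} (h : Wk R K u w l) :
    u ∈ K := by
  cases h <;> assumption

lemma Wk.symm {R : Pt → Pt → Prop} (hR : ∀ a b, R a b → R b a) {K : Set Pt} {u w : Pt} {l : ℝ}
    (h : Wk R K u w l) : Wk R K w u l := by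
  induction h with
  | nil u l hu hl0 => exact .nil u l hu hl0
  | cons u v w l m he hu h hl2 ih =>
    exact (ih.trans (Wk.single (hR _ _ he) h.left_mem hu le_rfl)).mono le_rfl (by
      rw [dst_comm v u]; linarith)

lemma Wk.to_fin {R : Pt → Pt → Prop} {K : Set Pt} {u w : Pt} {l : ℝ} (h : Wk R K u w l) :
    ∃ (n : ℕ) (f : Fin (n + 1) → Pt), IsPath R f ∧ f 0 = u ∧ f (Fin.last n) = w ∧
      pathLen f ≤ l ∧ ∀ j, f j ∈ K := by
  induction h with
  | nil u l hu hl0 =>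
    exact ⟨0, fun _ => u, fun j => j.elim0, rfl, rfl, by simpa [pathLen] using hl0, fun _ => hu⟩
  | cons u v w l m he hu h hl2 ih =>
    obtain ⟨n, f, h1, h2, h3, h4, h5⟩ := ih
    refine ⟨n + 1, Fin.cons u f, ?_, rfl, ?_, ?_, ?_⟩
    · intro j
      induction j using Fin.cases with
      | zero => simpa [h2] using he
      | succ j => simpa using h1 j
    · rw [← Fin.succ_last]; simpa using h3
    · rw [pathLen, Fin.sum_univ_succ]
      have e : ∀ j : Fin n, dst ((Fin.cons u f : Fin (n + 1 + 1) → Pt) j.succ.castSucc)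
          ((Fin.cons u f : Fin (n + 1 + 1) → Pt) j.succ.succ) = dst (f j.castSucc) (f j.succ) := by
        intro j; simp
      simp only [e]
      simp only [pathLen] at h4
      simp only [Fin.castSucc_zero, Fin.cons_zero, Fin.cons_succ, h2]
      linarith
    · intro j
      induction j using Fin.cases with
      | zero => simpa using hu
      | succ j => simpa using h5 j

/-! ### The convex chain -/

/-- The canonical triangle `T(u,w)` of `u` and `w` for the cone `i`. -/
def T (i : ℕ) (u w : Pt) : Set Pt :=
  {p | √3 * |(rel i u p).1| ≤ (rel i u p).2 ∧ (rel i u p).2 ≤ projLen i u w}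

lemma Tr.mem_T {i j k : ℕ} (h : Tr i j k) {u w p : Pt} :
    p ∈ T i u w ↔ E j (p - u) ≤ 0 ∧ E k (p - u) ≤ 0 ∧ E i (p - u) ≤ E i (w - u) := by
  rw [T, Set.mem_ofPred_eq, h.closed_iff, rel_snd, projLen_eq, and_assoc]

lemma Esub (m : ℕ) (p v u : Pt) : E m (p - v) = E m (p - u) - E m (v - u) := by
  simp only [map_sub]; ring

lemma cr3 (j k : ℕ) (p q v u : Pt) : cr j k (p - v) (q - v) =
    cr j k (p - u) (q - u) - cr j k (p - u) (v - u) - cr j k (v - u) (q - u) := by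
  simp only [cr, map_sub]; ring

lemma cr_swap (j k : ℕ) (p q : Pt) : cr j k p q = -cr j k q p := by
  simp only [cr]; ring

lemma cr_self (j k : ℕ) (p : Pt) : cr j k p p = 0 := by
  simp only [cr]; ring

lemma Tri_E {u v w q : Pt} (h : q ∈ Tri u v w) : ∃ α β : ℝ, 0 ≤ α ∧ 0 ≤ β ∧ α + β ≤ 1 ∧
    q - u = α • (v - u) + β • (w - u) ∧ ∀ m, E m (q - u) = α * E m (v - u) + β * E m (w - u) := by
  obtain ⟨α, β, h1, h2, h3, rfl⟩ := h
  have e : u + α • (v - u) + β • (w - u) - u = α • (v - u) + β • (w - u) := by abel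
  refine ⟨α, β, h1, h2, h3, e, fun m => ?_⟩
  rw [e, map_add, map_smul, map_smul, smul_eq_mul, smul_eq_mul]

lemma cr_of_comb {j k : ℕ} {V W Q X : Pt} {α β : ℝ}
    (h : ∀ m, E m Q = α * E m V + β * E m W) :
    cr j k X Q = α * cr j k X V + β * cr j k X W ∧
    cr j k Q X = α * cr j k V X + β * cr j k W X := by
  constructor <;> simp only [cr, h] <;> ring

lemma comb_E {V W Q : Pt} {α β : ℝ} (h : Q = α • V + β • W) (m : ℕ) :
    E m Q = α * E m V + β * E m W := by
  rw [h, map_add, map_smul, map_smul, smul_eq_mul, smul_eq_mul]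

lemma Tr.comb {i j k : ℕ} (h : Tr i j k) {V W : Pt} (h0 : cr j k W V ≠ 0) (Q : Pt) :
    Q = (cr j k W Q / cr j k W V) • V + (cr j k Q V / cr j k W V) • W := by
  obtain ⟨κ, hκ, hc⟩ := h.crossP_eq
  have h1 : crossP V W ≠ 0 := by
    rw [hc, cr_swap]; exact mul_ne_zero hκ (neg_ne_zero.2 h0)
  have := cramer h1 Q
  rw [hc, hc, hc, cr_swap j k Q W, cr_swap j k V W, cr_swap j k V Q, mul_div_mul_left _ _ hκ,
    mul_div_mul_left _ _ hκ, neg_div_neg_eq, neg_div_neg_eq] at this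
  exact this

lemma Tr.mem_Tri {i j k : ℕ} (h : Tr i j k) {u v w q : Pt} (h0 : 0 < cr j k (w - u) (v - u))
    (h1 : 0 ≤ cr j k (w - u) (q - u)) (h2 : 0 ≤ cr j k (q - u) (v - u))
    (h3 : cr j k (w - u) (q - u) + cr j k (q - u) (v - u) ≤ cr j k (w - u) (v - u)) :
    q ∈ Tri u v w := by
  refine ⟨_, _, div_nonneg h1 h0.le, div_nonneg h2 h0.le, ?_, ?_⟩
  · rw [← add_div, div_le_one h0]; exact h3
  · rw [add_assoc, ← h.comb h0.ne' (q - u)]; abel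

/-- Every vector is a combination of `d` and `p` with coefficients given by `cr`, in
denominator-free form. -/
lemma Tr.expand {i j k : ℕ} (h : Tr i j k) (d p δ : Pt) :
    (cr j k d p * E j δ = cr j k δ p * E j d + cr j k d δ * E j p) ∧
    (cr j k d p * E k δ = cr j k δ p * E k d + cr j k d δ * E k p) ∧
    (cr j k d p * E i δ = cr j k δ p * E i d + cr j k d δ * E i p) := by
  simp only [cr, h.sum]
  refine ⟨?_, ?_, ?_⟩ <;> ring

lemma Plane.cr_ne {P : Set Pt} {S : Set (Pt × Pt)} (H : Plane P S) {i j k : ℕ} (h : Tr i j k)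
    {u p q : Pt} (hu : u ∈ P) (hp : p ∈ P) (hq : q ∈ P) (hup : u ≠ p) (hpq : p ≠ q)
    (huq : u ≠ q) : cr j k (p - u) (q - u) ≠ 0 := by
  obtain ⟨κ, hκ, hc⟩ := h.crossP_eq
  have := H.gp u hu p hp q hq hup hpq huq
  rw [hc] at this
  exact right_ne_zero_of_mul this

/-- `v` is a possible vertex of the convex chain from the first vertex to `w`: it is visible from
`u`, lies strictly to the left of `uw` (for the orientation in which the coordinate `-E j`
increases to the right), no constraint at `u` separates it from `w`, and it is the lowest
vertex in the triangle `uvw`. -/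
structure Ch (P : Set Pt) (S : Set (Pt × Pt)) (i j k : ℕ) (u w v : Pt) : Prop where
  mem : v ∈ P
  ne : u ≠ v
  negj : E j (v - u) < 0
  negk : E k (v - u) < 0
  see : CanSee S u v
  left : 0 < cr j k (w - u) (v - u)
  nb : ∀ z, Constr S u z → ¬ ∃ s t : ℝ, 0 < s ∧ 0 < t ∧ z - u = s • (v - u) + t • (w - u)
  low : ∀ q ∈ P, q ∈ Tri u v w → q ≠ u → q ≠ v → E i (v - u) < E i (q - u)

/-- `p` follows `v` on the convex chain. -/
structure Nx (P : Set Pt) (S : Set (Pt × Pt)) (i j k : ℕ) (u w v p : Pt) : Prop where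
  mem : p ∈ P
  tri : p ∈ Tri u v w
  neu : u ≠ p
  nev : v ≠ p
  right : 0 < cr j k (p - u) (v - u)
  ext : ∀ q ∈ P, q ∈ Tri u v w → q ≠ u → 0 ≤ cr j k (p - v) (q - v)
  seev : CanSee S v p
  next : p = w ∨ Ch P S i j k u w p

/-- Gift wrapping: the next vertex of the chain is the one for which the whole triangle `uvw`
minus `u` stays above the line through it and `v`. -/
lemma Ch.exists_next {P : Set Pt} {S : Set (Pt × Pt)} (H : Plane P S) (hfin : P.Finite)
    {i j k : ℕ} (h : Tr i j k) {u v w : Pt} (hu : u ∈ P) (hw : w ∈ P) (huw : u ≠ w)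
    (hwj : E j (w - u) < 0) (hwk : E k (w - u) < 0) (hsw : CanSee S u w)
    (hv : Ch P S i j k u w v) : ∃ p, Nx P S i j k u w v p := by
  have hW := hv.left
  have hvw : v ≠ w := by rintro rfl; rw [cr_self] at hW; exact lt_irrefl _ hW
  have hqv : ∀ q ∈ P, q ∈ Tri u v w → q ≠ u → q ≠ v → 0 < cr j k (q - u) (v - u) := by
    intro q hq hqT hqu hqv
    obtain ⟨α, β, h1, h2, h3, -, h4⟩ := Tri_E hqT
    have := (cr_of_comb (j := j) (k := k) (X := v - u) h4).2
    rw [cr_self, mul_zero, zero_add] at this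
    refine lt_of_le_of_ne ?_ (H.cr_ne h hu hq hv.mem hqu.symm hqv hv.ne).symm
    rw [this]; positivity
  obtain ⟨p, ⟨hp, hpT, hpu, hpv⟩, hmax⟩ := Set.exists_max_image
    {q | q ∈ P ∧ q ∈ Tri u v w ∧ q ≠ u ∧ q ≠ v}
    (fun q => (cr j k (w - u) (v - u) - cr j k (w - u) (q - u)) / cr j k (q - u) (v - u))
    (hfin.subset fun q hq => hq.1) ⟨w, hw, Tri_Y u v w, huw.symm, hvw.symm⟩
  have hpr := hqv p hp hpT hpu hpv
  have ext : ∀ q ∈ P, q ∈ Tri u v w → q ≠ u → 0 ≤ cr j k (p - v) (q - v) := by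
    intro q hq hqT hqu
    by_cases hqv' : q = v
    · subst hqv'; simp [cr]
    have hqr := hqv q hq hqT hqu hqv'
    have := hmax q ⟨hq, hqT, hqu, hqv'⟩
    rw [div_le_div_iff₀ hqr hpr] at this
    have id : cr j k (w - u) (v - u) * cr j k (p - v) (q - v) =
        (cr j k (w - u) (v - u) - cr j k (w - u) (p - u)) * cr j k (q - u) (v - u) -
        (cr j k (w - u) (v - u) - cr j k (w - u) (q - u)) * cr j k (p - u) (v - u) := by
      rw [cr3 j k p q v u]; simp only [cr]; ring
    have : 0 ≤ cr j k (w - u) (v - u) * cr j k (p - v) (q - v) := by rw [id]; linarith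
    exact nonneg_of_mul_nonneg_right this hW
  obtain ⟨α, β, hα, hβ, hαβ, hpe, hpE⟩ := Tri_E hpT
  have hβ' : 0 < β := by
    have := (cr_of_comb (j := j) (k := k) (X := v - u) hpE).2
    rw [cr_self, mul_zero, zero_add] at this
    rw [this] at hpr
    exact pos_of_mul_pos_left hpr hW.le
  have hsp : CanSee S u p := by
    refine H.sees_of_extreme hu hv.mem hw hp hv.ne huw hv.see hsw hpT hpu
      (E j (p - v) • E k - E k (p - v) • E j) ?_ ?_
    · intro q hq hqT hqu
      have := ext q hq hqT hqu
      simp only [cr, LinearMap.sub_apply, LinearMap.smul_apply, smul_eq_mul, map_sub] at this ⊢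
      linarith
    · have := hpr
      simp only [cr, LinearMap.sub_apply, LinearMap.smul_apply, smul_eq_mul, map_sub] at this ⊢
      linarith
  have hsvp : CanSee S v p := by
    refine H.sees_across hu hv.mem hp hv.ne hpu.symm hpv.symm hv.see hsp ?_ ?_
    · intro q hq hqT
      by_contra hcon
      push Not at hcon
      have h1 := ext q hq (Tri_sub hpT hqT) hcon.1
      have h2 := H.cr_ne h hv.mem hp hq hpv.symm hcon.2.2.symm hcon.2.1.symm
      obtain ⟨a, b, -, -, hab, -, hE⟩ := Tri_E hqT
      have e : cr j k (p - v) (q - v) = (a + b - 1) * cr j k (p - u) (v - u) := by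
        rw [cr3 j k p q v u, (cr_of_comb hE).1, (cr_of_comb hE).1, cr_self, cr_self,
          cr_swap j k (v - u) (p - u)]
        ring
      have h3 : 0 < (a + b - 1) * cr j k (p - u) (v - u) := e ▸ lt_of_le_of_ne h1 h2.symm
      have := pos_of_mul_pos_left h3 hpr.le
      linarith
    · rintro z hz ⟨s, t, hs, ht, e⟩
      refine hv.nb z hz ⟨s + t * α, t * β, by positivity, by positivity, ?_⟩
      rw [e, hpe]; module
  refine ⟨p, hp, hpT, hpu.symm, hpv.symm, hpr, ext, hsvp, ?_⟩
  by_cases hpw : p = w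
  · exact Or.inl hpw
  right
  have hwp : 0 < cr j k (w - u) (p - u) := by
    refine lt_of_le_of_ne ?_ (H.cr_ne h hu hw hp huw (Ne.symm hpw) hpu.symm).symm
    rw [(cr_of_comb hpE).1, cr_self]; positivity
  have hα' : 0 < α := by
    rw [(cr_of_comb hpE).1, cr_self, mul_zero, add_zero] at hwp
    exact pos_of_mul_pos_left hwp hW.le
  have hpj : E j (p - u) < 0 := by
    rw [hpE]; nlinarith [hv.negj]
  have hpk : E k (p - u) < 0 := by
    rw [hpE]; nlinarith [hv.negk]
  refine ⟨hp, hpu.symm, hpj, hpk, hsp, hwp, ?_, ?_⟩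
  · rintro z hz ⟨s, t, hs, ht, e⟩
    refine hv.nb z hz ⟨s * α, s * β + t, by positivity, by positivity, ?_⟩
    rw [e, hpe]; module
  · intro q hq hqT hqu hqp
    have hqT' : q ∈ Tri u v w := Tri_swap (Tri_sub (Tri_swap hpT) (Tri_swap hqT))
    have h1 := ext q hq hqT' hqu
    obtain ⟨a, b, ha, hb, -, -, hE⟩ := Tri_E hqT
    have h2 : 0 < cr j k (q - u) (p - u) := by
      refine lt_of_le_of_ne ?_ (H.cr_ne h hu hq hp hqu.symm hqp hpu.symm).symm
      rw [(cr_of_comb hE).2, cr_self]; positivity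
    have h3 := (h.expand (p - v) (p - u) (q - p)).2.2
    have e1 : cr j k (p - v) (p - u) = cr j k (p - u) (v - u) := by
      simp only [cr, map_sub]; ring
    have e2 : cr j k (q - p) (p - u) = cr j k (q - u) (p - u) := by
      simp only [cr, map_sub]; ring
    have e3 : cr j k (p - v) (q - p) = cr j k (p - v) (q - v) := by
      simp only [cr, map_sub]; ring
    have h4 := hv.low p hp hpT hpu hpv
    have h5 : 0 < E i (p - v) := by rw [Esub i p v u]; linarith
    have h6 : 0 < E i (p - u) := by rw [h.sum]; linarith
    have h7 : 0 < E i (q - p) := by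
      rw [e1, e2, e3] at h3
      have : 0 < cr j k (p - u) (v - u) * E i (q - p) := by
        rw [h3]; positivity
      exact pos_of_mul_pos_right this hpr.le
    rw [Esub i q p u] at h7
    linarith

/-! ### Emptiness to the right -/

/-- No vertex visible from `u`, in the same subcone of the cone `i` as `w` and no higher than `w`,
lies strictly to the right of `uw`, the side where `-E j` is large. -/
def RE (P : Set Pt) (S : Set (Pt × Pt)) (i j k : ℕ) (u w : Pt) : Prop :=
  ∀ r ∈ P, inPos i u r → CanSee S u r → SameSubPos S i u w r → E i (r - u) ≤ E i (w - u) →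
    cr j k (r - u) (w - u) ≤ 0

/-- The inductive claim for the pair `u`, `w`. In the coordinates `a = -E j` and `b = -E k` of
`w - u`, the general bound is `2/√3 * (a + b + max a b)`; it improves to `2/√3 * (2a + b)`,
whichever of `a`, `b` is larger, when there is nothing to the right of `uw`. -/
def M (P : Set Pt) (S : Set (Pt × Pt)) (i : ℕ) (u w : Pt) : Prop :=
  ∀ j k, Tr i j k →
    Wk (HEdge P S) (T i u w) u w
      (2 / √3 * (-E j (w - u) - E k (w - u) + max (-E j (w - u)) (-E k (w - u)))) ∧
    (RE P S i j k u w →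
      Wk (HEdge P S) (T i u w) u w (2 / √3 * (-2 * E j (w - u) - E k (w - u))))

/-- Two points of the cone `i` of `u` are in the same subcone if no constraint direction at `u` is
a positive combination of theirs: inside the cone, separating and lying between are the same. -/
lemma sameSub_of_nb {S : Set (Pt × Pt)} {i j k : ℕ} (h : Tr i j k) {u w q : Pt}
    (hwj : E j (w - u) < 0) (hqj : E j (q - u) < 0)
    (hnb : ∀ z, Constr S u z → ¬ ∃ s t : ℝ, 0 < s ∧ 0 < t ∧ z - u = s • (w - u) + t • (q - u)) :
    SameSubPos S i u w q := by
  intro z hz hzi hlt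
  obtain ⟨κ, hκ, hc⟩ := h.crossP_eq
  have hzj := ((h.inPos_iff u z).1 hzi).1
  have hκ2 : 0 < κ ^ 2 := by positivity
  have hlt' : cr j k (z - u) (w - u) * cr j k (z - u) (q - u) < 0 := by
    rw [hc, hc] at hlt
    by_contra hcon
    push Not at hcon
    nlinarith [mul_nonneg hκ2.le hcon]
  by_cases hD : cr j k (q - u) (w - u) = 0
  · obtain ⟨e1, -, -⟩ := h.expand (q - u) (w - u) (z - u)
    rw [hD, zero_mul, cr_swap j k (q - u)] at e1
    have h1 : cr j k (z - u) (w - u) * E j (q - u) = cr j k (z - u) (q - u) * E j (w - u) := by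
      linarith
    have h2 : (cr j k (z - u) (w - u) * cr j k (z - u) (q - u)) * (E j (q - u)) ^ 2 =
        cr j k (z - u) (q - u) ^ 2 * (E j (w - u) * E j (q - u)) := by
      linear_combination cr j k (z - u) (q - u) * E j (q - u) * h1
    have h3 : 0 < E j (w - u) * E j (q - u) := mul_pos_of_neg_of_neg hwj hqj
    have h4 : 0 < E j (q - u) ^ 2 := by rw [sq]; exact mul_self_pos.2 hqj.ne
    nlinarith [mul_nonneg (sq_nonneg (cr j k (z - u) (q - u))) h3.le, mul_neg_of_neg_of_pos hlt' h4]
  have e := h.comb hD (z - u)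
  set s := cr j k (q - u) (z - u) / cr j k (q - u) (w - u) with hs
  set t := cr j k (z - u) (w - u) / cr j k (q - u) (w - u) with ht
  have hst : 0 < s * t := by
    rw [hs, ht, div_mul_div_comm, cr_swap j k (q - u) (z - u)]
    exact div_pos (by linarith) (mul_self_pos.2 hD)
  have ej := comb_E e j
  rcases pos_and_pos_or_neg_and_neg_of_mul_pos hst with ⟨h1, h2⟩ | ⟨h1, h2⟩
  · exact hnb z hz ⟨s, t, h1, h2, e⟩
  · nlinarith [mul_pos_of_neg_of_neg h1 hwj, mul_pos_of_neg_of_neg h2 hqj]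

/-- If `v` sees a vertex `r` across `uw`, then `u` sees a vertex on the side of `r`. -/
lemma Ch.cross {P : Set Pt} {S : Set (Pt × Pt)} (H : Plane P S) (hfin : P.Finite)
    {i j k : ℕ} (h : Tr i j k) {u v w r : Pt} (hu : u ∈ P) (hw : w ∈ P) (huw : u ≠ w)
    (hwj : E j (w - u) < 0) (hwk : E k (w - u) < 0) (hsw : CanSee S u w)
    (hv : Ch P S i j k u w v) (hr : r ∈ P) (hvr : v ≠ r) (hru : u ≠ r) (hRj : E j (r - u) < 0)
    (hRk : E k (r - u) < 0) (hRi : E i (r - u) ≤ E i (w - u)) (hlow : E i (v - u) < E i (w - u))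
    (hRV : 0 < cr j k (r - u) (v - u)) (hc : cr j k (w - u) (r - u) < 0) (hsr : CanSee S v r) :
    ∃ q ∈ P, inPos i u q ∧ CanSee S u q ∧ SameSubPos S i u w q ∧ E i (q - u) ≤ E i (w - u) ∧
      0 < cr j k (q - u) (w - u) := by
  have hW := hv.left
  -- the segment `vr` meets `uw` at `x`
  set τ := cr j k (w - u) (v - u) / (cr j k (w - u) (v - u) - cr j k (w - u) (r - u)) with hτ
  have hden : 0 < cr j k (w - u) (v - u) - cr j k (w - u) (r - u) := by linarith
  have hτ0 : 0 < τ := div_pos hW hden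
  have hτ1 : τ < 1 := by rw [hτ, div_lt_one hden]; linarith
  have hτe : τ * (cr j k (w - u) (v - u) - cr j k (w - u) (r - u)) = cr j k (w - u) (v - u) :=
    div_mul_cancel₀ _ hden.ne'
  set x := v + τ • (r - v) with hx
  have hxE : ∀ m, E m (x - u) = (1 - τ) * E m (v - u) + τ * E m (r - u) := by
    intro m; rw [hx]; simp only [map_sub, map_add, map_smul, smul_eq_mul]; ring
  have hxW : cr j k (w - u) (x - u) = 0 := by
    rw [(cr_of_comb hxE).1]; linarith
  have hxV : cr j k (x - u) (v - u) = τ * cr j k (r - u) (v - u) := by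
    rw [(cr_of_comb hxE).2, cr_self, mul_zero, zero_add]
  set lam := cr j k (x - u) (v - u) / cr j k (w - u) (v - u) with hlam
  have hxl : x - u = lam • (w - u) := by
    have := h.comb hW.ne' (x - u)
    rw [hxW, zero_div, zero_smul, zero_add] at this
    exact this
  have hlam0 : 0 < lam := by
    rw [hlam, hxV]; positivity
  have hlam1 : lam < 1 := by
    have hwi : 0 < E i (w - u) := by rw [h.sum]; linarith
    have h1 : E i (x - u) < E i (w - u) := by
      rw [hxE]; nlinarith
    rw [hxl, map_smul, smul_eq_mul] at h1
    by_contra hc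
    push Not at hc
    nlinarith
  obtain ⟨κ, hκ, hcP⟩ := h.crossP_eq
  have hwr : cr j k (w - u) (r - u) ≠ 0 := hc.ne
  obtain ⟨q, hq, hsq, ⟨α, β, hα, hβ, hαβ, hqe⟩, hnb⟩ :=
    H.exists_visible (x := x) hfin hu hv.mem hw hr hv.ne huw hru hvr hsw hsr
      (mem_open_iff.2 ⟨lam, hlam0, hlam1, by rw [← hxl]; abel⟩)
      (mem_open_iff.2 ⟨τ, hτ0, hτ1, rfl⟩) (by
        rw [hcP]
        refine mul_ne_zero hκ ?_
        have : cr j k (x - u) (r - u) = lam * cr j k (w - u) (r - u) := by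
          rw [hxl]; simp only [cr, map_smul, smul_eq_mul]; ring
        rw [this]; exact mul_ne_zero hlam0.ne' hwr)
  have hqE : ∀ m, E m (q - u) = (α * lam) * E m (w - u) + β * E m (r - u) := by
    intro m
    have e : q - u = α • (x - u) + β • (r - u) := by rw [hqe]; abel
    rw [e, map_add, map_smul, map_smul, hxl, map_smul]; simp only [smul_eq_mul]; ring
  have hal : 0 ≤ α * lam := by positivity
  have hqj : E j (q - u) < 0 := by
    rw [hqE]; nlinarith [mul_nonneg hal (neg_nonneg.2 hwj.le), mul_pos hβ (neg_pos.2 hRj)]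
  have hqk : E k (q - u) < 0 := by
    rw [hqE]; nlinarith [mul_nonneg hal (neg_nonneg.2 hwk.le), mul_pos hβ (neg_pos.2 hRk)]
  have hqi : E i (q - u) ≤ E i (w - u) := by
    have hwi : 0 < E i (w - u) := by rw [h.sum]; linarith
    have h1 : α * lam ≤ α := by nlinarith
    rw [hqE]
    nlinarith [mul_le_mul_of_nonneg_right h1 hwi.le, mul_le_mul_of_nonneg_left hRi hβ.le]
  refine ⟨q, hq, (h.inPos_iff u q).2 ⟨hqj, hqk⟩, hsq, sameSub_of_nb h hwj hqj hnb, hqi, ?_⟩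
  rw [(cr_of_comb hqE).2, cr_self, cr_swap]
  nlinarith

/-- Emptiness to the right is inherited by an edge of the chain that points into the cone `i`:
a vertex to the right of it is either in the triangle `uvw` below the chain edge, or is seen from
`v` across `uw`, and then `u` sees a vertex to the right of `uw`. -/
lemma Nx.re {P : Set Pt} {S : Set (Pt × Pt)} (H : Plane P S) (hfin : P.Finite)
    {i j k : ℕ} (h : Tr i j k) {u v w p : Pt} (hu : u ∈ P) (hw : w ∈ P) (huw : u ≠ w)
    (hwj : E j (w - u) < 0) (hwk : E k (w - u) < 0) (hsw : CanSee S u w)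
    (hv : Ch P S i j k u w v) (hp : Nx P S i j k u w v p) (hdk : E k (p - v) < 0)
    (hre : RE P S i j k u w) : RE P S i j k v p := by
  intro r hr hri hsr _ hrp
  by_contra hcon
  push Not at hcon
  obtain ⟨hrj, hrk⟩ := (h.inPos_iff v r).1 hri
  have hW := hv.left
  have hvw : v ≠ w := by rintro rfl; rw [cr_self] at hW; exact lt_irrefl _ hW
  have hvr : v ≠ r := by rintro rfl; simp at hrj
  have hdV : cr j k (p - v) (v - u) = cr j k (p - u) (v - u) := by
    simp only [cr, map_sub]; ring
  have hd : 0 < cr j k (p - v) (v - u) := hdV ▸ hp.right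
  have hdj : E j (p - v) < 0 := by
    have := hv.negj; have := hv.negk
    simp only [cr] at hd
    by_contra hc
    push Not at hc
    nlinarith [mul_pos_of_neg_of_neg hdk hv.negj, mul_nonneg hc (neg_nonneg.2 hv.negk.le)]
  have hrV : 0 < cr j k (r - v) (v - u) := by
    have e : cr j k (r - v) (v - u) * (-E k (p - v)) =
      cr j k (r - v) (p - v) * (-E k (v - u)) + (-E k (r - v)) * cr j k (p - v) (v - u) := by
      simp only [cr]; ring
    have : 0 < cr j k (r - v) (v - u) * (-E k (p - v)) := by
      rw [e]
      have := mul_pos hcon (neg_pos.2 hv.negk)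
      have := mul_pos (neg_pos.2 hrk) hd
      linarith
    exact pos_of_mul_pos_left this (by linarith)
  have hRV : cr j k (r - u) (v - u) = cr j k (r - v) (v - u) := by
    simp only [cr, map_sub]; ring
  have hrV' : 0 < cr j k (r - u) (v - u) := hRV ▸ hrV
  have hru : u ≠ r := by
    rintro rfl; rw [← hRV] at hrV; simp [cr] at hrV
  have hRj : E j (r - u) < 0 := by have := Esub j r v u; have := hv.negj; linarith
  have hRk : E k (r - u) < 0 := by have := Esub k r v u; have := hv.negk; linarith
  have hwv : w ≠ v := hvw.symm
  have hlow : E i (v - u) < E i (w - u) := hv.low w hw (Tri_Y u v w) huw.symm hwv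
  rcases le_or_gt 0 (cr j k (w - u) (r - u)) with hc | hc
  · have hrT : r ∈ Tri u v w := by
      refine h.mem_Tri hW hc (hRV ▸ hrV.le) ?_
      have e1 := (h.expand (p - v) (v - u) (w - v))
      have e2 : cr j k (p - v) (v - u) * cr j k (r - v) (w - v) =
          cr j k (w - v) (v - u) * cr j k (r - v) (p - v) +
          cr j k (p - v) (w - v) * cr j k (r - v) (v - u) := by
        simp only [cr]; ring
      have e3 : cr j k (w - v) (v - u) = cr j k (w - u) (v - u) := by
        simp only [cr, map_sub]; ring
      have h4 := hp.ext w hw (Tri_Y u v w) huw.symm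
      have h5 : 0 ≤ cr j k (r - v) (w - v) := by
        refine nonneg_of_mul_nonneg_right (a := cr j k (p - v) (v - u)) ?_ hd
        rw [e2, e3]; positivity
      have e6 : cr j k (r - v) (w - v) = cr j k (w - u) (v - u) - cr j k (w - u) (r - u)
          - cr j k (r - u) (v - u) := by
        simp only [cr, map_sub]; ring
      linarith
    have := hp.ext r hr hrT hru.symm
    rw [cr_swap] at this
    linarith
  · have hEip : E i (p - u) ≤ E i (w - u) := by
      obtain ⟨α, β, hα, hβ, hαβ, -, hE⟩ := Tri_E hp.tri
      have hwi : 0 < E i (w - u) := by rw [h.sum]; linarith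
      rw [hE]; nlinarith
    have hRi : E i (r - u) ≤ E i (w - u) := by
      have h1 := Esub i r v u
      have h2 := Esub i p v u
      linarith
    obtain ⟨q, hq, hqi, hsq, hss, hqw, hqr⟩ :=
      hv.cross H hfin h hu hw huw hwj hwk hsw hr hvr hru hRj hRk hRi hlow hrV' hc hsr
    exact absurd (hre q hq hqi hsq hss hqw) (not_le.2 hqr)

/-- For an edge of the chain that points downwards to the right, nothing is visible to the right
of the reversed edge. -/
lemma Nx.re' {P : Set Pt} {S : Set (Pt × Pt)}
    {i j k : ℕ} (h : Tr i j k) {u v w p : Pt}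
    (hv : Ch P S i j k u w v) (hp : Nx P S i j k u w v p) (hpj : E j (p - u) < 0)
    (hpk : E k (p - u) < 0) (hdk : 0 < E k (p - v)) (hdj : E j (p - v) < 0) :
    RE P S j i k p v := by
  have hji : Tr j i k := h.cyc.swap
  intro r hr hri _ _ hrv
  by_contra hcon
  push Not at hcon
  obtain ⟨hri', hrk⟩ := (hji.inPos_iff p r).1 hri
  have e1 : cr i k (r - p) (v - p) = cr j k (r - p) (p - v) := by
    simp only [cr, h.sum, map_sub]; ring
  rw [e1] at hcon
  rw [h.sum] at hri'
  have hrj' : E j (r - v) ≤ 0 := by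
    have e1 := Esub j r p v
    have e2 : E j (v - p) = -E j (p - v) := by simp only [map_sub]; ring
    linarith
  have hPR : 0 < cr j k (p - u) (r - u) := by
    have e : cr j k (p - u) (r - u) = cr j k (p - u) (r - p) := by
      simp only [cr, map_sub]; ring
    rw [e, cr]
    nlinarith [mul_pos_of_neg_of_neg hpj hrk, mul_neg_of_neg_of_pos hpk (by linarith : 0 < E j (r - p))]
  have hvk : 0 < E k (r - v) := by
    have e1 := Esub k r p v
    have e2 : E j (v - p) = -E j (p - v) := by simp only [map_sub]; ring
    have h2 : cr j k (r - p) (p - v) = cr j k (r - v) (p - v) := by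
      simp only [cr, map_sub]; ring
    rw [h2, cr] at hcon
    by_contra hc
    push Not at hc
    nlinarith [mul_nonneg_of_nonpos_of_nonpos hc hdj.le, mul_nonneg (neg_nonneg.2 hrj') hdk.le]
  have hRV : 0 < cr j k (r - u) (v - u) := by
    have e : cr j k (r - u) (v - u) = cr j k (r - v) (v - u) := by
      simp only [cr, map_sub]; ring
    rw [e, cr]
    nlinarith [mul_nonneg_of_nonpos_of_nonpos hrj' hv.negk.le, mul_pos hvk (neg_pos.2 hv.negj)]
  have hru : r ≠ u := by rintro rfl; simp [cr] at hRV
  have hrT : r ∈ Tri u v p := by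
    refine h.mem_Tri hp.right hPR.le hRV.le ?_
    have : cr j k (r - p) (p - v) = cr j k (p - u) (v - u) - cr j k (p - u) (r - u)
      - cr j k (r - u) (v - u) := by
      simp only [cr, map_sub]; ring
    linarith
  have h1 := hp.ext r hr (Tri_sub hp.tri hrT) hru
  have h2 : cr j k (r - p) (p - v) = - cr j k (p - v) (r - v) := by
    simp only [cr, map_sub]; ring
  linarith

/-! ### Length of the chain -/

lemma HEdge.symm {P : Set Pt} {S : Set (Pt × Pt)} (a b : Pt) (h : HEdge P S a b) :
    HEdge P S b a := Or.symm h

lemma Constr.symm {S : Set (Pt × Pt)} {a b : Pt} (h : Constr S a b) : Constr S b a := Or.symm h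

lemma CanSee.symm {S : Set (Pt × Pt)} {a b : Pt} (h : CanSee S a b) : CanSee S b a := by
  rcases h with h | h
  · exact Or.inl h.symm
  · right
    intro c hc hx
    refine h c hc ?_
    rwa [PCross, openSegment_symm ℝ a b]

/-- Cost of one chain edge `vp`, in the coordinates `da = -E j (p - v)` and `db = -E k (p - v)`:
the larger of `da`, `db` counts twice, and `da` always does when nothing is to the right
of `uw`. -/
lemma Nx.cost {P : Set Pt} {S : Set (Pt × Pt)} (H : Plane P S) (hfin : P.Finite)
    (hG : ∀ p ∈ P, ∀ q ∈ P, p ≠ q → ∀ i < 3, E i (q - p) ≠ 0)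
    {i j k : ℕ} (h : Tr i j k) {u v w p : Pt} (hu : u ∈ P) (hw : w ∈ P) (huw : u ≠ w)
    (hwj : E j (w - u) < 0) (hwk : E k (w - u) < 0) (hsw : CanSee S u w)
    (ih : ∀ i' < 3, ∀ u' ∈ P, ∀ w' ∈ P, u' ≠ w' → CanSee S u' w' → inPos i' u' w' →
      E i' (w' - u') < E i (w - u) → M P S i' u' w')
    (hv : Ch P S i j k u w v) (hp : Nx P S i j k u w v p) :
    (E j (p - v) < E k (p - v) → Wk (HEdge P S) (T i u w) v p
      (2 / √3 * (-2 * E j (p - v) - E k (p - v)))) ∧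
    (E k (p - v) ≤ E j (p - v) → Wk (HEdge P S) (T i u w) v p
      (2 / √3 * (-E j (p - v) - 2 * E k (p - v)))) ∧
    (RE P S i j k u w → Wk (HEdge P S) (T i u w) v p
      (2 / √3 * (-2 * E j (p - v) - E k (p - v)))) := by
  have hdi : 0 < E i (p - v) := by
    have := hv.low p hp.mem hp.tri hp.neu.symm hp.nev.symm
    rw [Esub i p v u]; linarith
  have hd : 0 < cr j k (p - v) (v - u) := by
    have e : cr j k (p - v) (v - u) = cr j k (p - u) (v - u) := by
      simp only [cr, map_sub]; ring
    rw [e]; exact hp.right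
  have hsum := h.sum (p - v)
  have hwv : w ≠ v := by
    rintro rfl; have := hv.left; rw [cr_self] at this; exact lt_irrefl _ this
  have hlow : E i (v - u) < E i (w - u) := hv.low w hw (Tri_Y u v w) huw.symm hwv
  have hvi : 0 < E i (v - u) := by rw [h.sum]; linarith [hv.negj, hv.negk]
  have hwi := h.sum (w - u)
  obtain ⟨α, β, hα, hβ, hαβ, -, hE⟩ := Tri_E hp.tri
  have hpi : E i (p - u) ≤ E i (w - u) := by
    rw [hE]; nlinarith
  have hpj : E j (p - u) ≤ 0 := by
    rw [hE]; nlinarith [mul_nonneg hα (neg_nonneg.2 hv.negj.le), mul_nonneg hβ (neg_nonneg.2 hwj.le)]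
  have hpk : E k (p - u) ≤ 0 := by
    rw [hE]; nlinarith [mul_nonneg hα (neg_nonneg.2 hv.negk.le), mul_nonneg hβ (neg_nonneg.2 hwk.le)]
  have hpj' : E j (p - u) < 0 := by
    refine lt_of_le_of_ne hpj (hG u hu p hp.mem hp.neu j h.2.1)
  have hpk' : E k (p - u) < 0 := by
    refine lt_of_le_of_ne hpk (hG u hu p hp.mem hp.neu k h.2.2.1)
  have hk0 := hG v hv.mem p hp.mem hp.nev k h.2.2.1
  have hdj : E j (p - v) < 0 := by
    by_contra hc
    push Not at hc
    rw [cr] at hd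
    have hk : E k (p - v) < 0 := by linarith
    nlinarith [mul_nonneg hc (neg_nonneg.2 hv.negk.le), mul_pos_of_neg_of_neg hk hv.negj]
  rcases lt_or_gt_of_ne hk0 with hk | hk
  · -- the edge points upwards, `p` is in the cone `i` of `v`
    have hT : T i v p ⊆ T i u w := by
      intro x hx
      rw [h.mem_T] at hx ⊢
      obtain ⟨h1, h2, h3⟩ := hx
      have := Esub j x v u
      have := Esub k x v u
      have := Esub i x v u
      have := Esub i p v u
      have := hv.negj
      have := hv.negk
      refine ⟨?_, ?_, ?_⟩ <;> linarith
    obtain ⟨m1, m2⟩ := ih i h.1 v hv.mem p hp.mem hp.nev hp.seev ((h.inPos_iff v p).2 ⟨hdj, hk⟩)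
      (by rw [Esub i p v u]; linarith) j k h
    refine ⟨fun hlt => m1.mono hT ?_, fun hle => m1.mono hT ?_, fun hre => (m2 ?_).mono hT le_rfl⟩
    · rw [max_eq_left (by linarith)]; apply le_of_eq; ring
    · rw [max_eq_right (by linarith)]; apply le_of_eq; ring
    · exact hp.re H hfin h hu hw huw hwj hwk hsw hv hk hre
  · -- the edge points downwards to the right, `v` is in the cone `j` of `p`
    have hji : Tr j i k := h.cyc.swap
    have ej : ∀ m, E m (v - p) = -E m (p - v) := fun m => by simp only [map_sub]; ring
    have hT : T j p v ⊆ T i u w := by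
      intro x hx
      rw [hji.mem_T] at hx
      rw [h.mem_T]
      obtain ⟨h1, h2, h3⟩ := hx
      have := Esub j x p u
      have := Esub k x p u
      have := Esub i x p u
      have := Esub j p v u
      have := ej j
      have := hv.negj
      refine ⟨?_, ?_, ?_⟩ <;> linarith
    have hsize : E j (v - p) < E i (w - u) := by
      rw [ej, Esub j p v u, hE, hwi]
      nlinarith [mul_nonneg hα (neg_nonneg.2 hv.negj.le), hv.negj,
        mul_nonneg (by linarith : 0 ≤ 1 - β) (neg_nonneg.2 hwj.le)]
    have m := (ih j h.2.1 p hp.mem v hv.mem hp.nev.symm hp.seev.symm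
      ((hji.inPos_iff p v).2 ⟨by rw [ej]; linarith, by rw [ej]; linarith⟩) hsize i k hji).2
      (hp.re' h hv hpj' hpk' hk hdj)
    have hback : Wk (HEdge P S) (T i u w) v p (2 / √3 * (-2 * E j (p - v) - E k (p - v))) := by
      refine (m.symm HEdge.symm).mono hT (le_of_eq ?_)
      rw [ej, ej, hsum]; ring
    exact ⟨fun _ => hback, fun hle => by linarith, fun _ => hback⟩

/-- Length bounds for the walk along the chain from `v` to `w`: in general, when nothing is visible
to the right of `uw`, and when `v - u` and all directions from `v` into the triangle have `-E k` at
least as large as `-E j`. -/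
structure Res (P : Set Pt) (S : Set (Pt × Pt)) (i j k : ℕ) (u w v : Pt) : Prop where
  gen : Wk (HEdge P S) (T i u w) v w (2 / √3 * (-2 * E j (w - v) - E k (w - v) +
    max 0 (E j (w - u) - E k (w - u))))
  empty : RE P S i j k u w →
    Wk (HEdge P S) (T i u w) v w (2 / √3 * (-2 * E j (w - v) - E k (w - v)))
  steep : E k (v - u) ≤ E j (v - u) →
    (∀ q ∈ P, q ∈ Tri u v w → q ≠ u → E k (q - v) ≤ E j (q - v)) →
    Wk (HEdge P S) (T i u w) v w (2 / √3 * (-E j (w - v) - 2 * E k (w - v)))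

/-- The costs of the chain edges telescope. The induction is on the number of vertices higher
than `v`, since the chain ascends in the direction of the cone. -/
lemma Ch.res {P : Set Pt} {S : Set (Pt × Pt)} (H : Plane P S) (hfin : P.Finite)
    (hG : ∀ p ∈ P, ∀ q ∈ P, p ≠ q → ∀ i < 3, E i (q - p) ≠ 0)
    {i j k : ℕ} (h : Tr i j k) {u w : Pt} (hu : u ∈ P) (hw : w ∈ P) (huw : u ≠ w)
    (hwj : E j (w - u) < 0) (hwk : E k (w - u) < 0) (hsw : CanSee S u w)
    (ih : ∀ i' < 3, ∀ u' ∈ P, ∀ w' ∈ P, u' ≠ w' → CanSee S u' w' → inPos i' u' w' →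
      E i' (w' - u') < E i (w - u) → M P S i' u' w') (n : ℕ) :
    ∀ v, Ch P S i j k u w v → {q | q ∈ P ∧ E i (v - u) < E i (q - u)}.ncard ≤ n →
      Res P S i j k u w v := by
  induction n with
  | zero =>
    intro v hv hn
    have hwv : w ≠ v := by
      rintro rfl; have := hv.left; rw [cr_self] at this; exact lt_irrefl _ this
    have hlow : E i (v - u) < E i (w - u) := hv.low w hw (Tri_Y u v w) huw.symm hwv
    rw [Nat.le_zero, Set.ncard_eq_zero (hfin.subset fun q hq => hq.1)] at hn
    exact absurd (show w ∈ {q | q ∈ P ∧ E i (v - u) < E i (q - u)} from ⟨hw, hlow⟩)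
      (by rw [hn]; exact notMem_empty w)
  | succ n ihn =>
    intro v hv hn
    obtain ⟨p, hp⟩ := hv.exists_next H hfin h hu hw huw hwj hwk hsw
    obtain ⟨c1, c2, c3⟩ := hp.cost H hfin hG h hu hw huw hwj hwk hsw ih hv
    have hpi : E i (v - u) < E i (p - u) :=
      hv.low p hp.mem hp.tri hp.neu.symm hp.nev.symm
    have hd : 0 < cr j k (p - v) (v - u) := by
      have e : cr j k (p - v) (v - u) = cr j k (p - u) (v - u) := by
        simp only [cr, map_sub]; ring
      rw [e]; exact hp.right
    have hdP : cr j k (p - v) (p - u) = cr j k (p - v) (v - u) := by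
      simp only [cr, map_sub]; ring
    have hwT : w ∈ T i u w := h.mem_T.2 ⟨hwj.le, hwk.le, le_rfl⟩
    have ew : ∀ m, E m (w - v) = E m (p - v) + E m (w - p) := fun m => by
      simp only [map_sub]; ring
    have resp : p ≠ w → Res P S i j k u w p := by
      intro hpw
      refine ihn p (hp.next.resolve_left hpw) ?_
      have : {q | q ∈ P ∧ E i (p - u) < E i (q - u)}.ncard <
          {q | q ∈ P ∧ E i (v - u) < E i (q - u)}.ncard := by
        refine Set.ncard_lt_ncard ⟨fun q hq => ⟨hq.1, hpi.trans hq.2⟩, fun hss => ?_⟩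
          (hfin.subset fun q hq => hq.1)
        exact lt_irrefl _ (hss (⟨hp.mem, hpi⟩ : p ∈ {q | q ∈ P ∧ E i (v - u) < E i (q - u)})).2
      omega
    have gen' : Wk (HEdge P S) (T i u w) p w (2 / √3 * (-2 * E j (w - p) - E k (w - p) +
        max 0 (E j (w - u) - E k (w - u)))) := by
      by_cases hpw : p = w
      · rw [hpw]
        refine .nil w _ hwT ?_
        simp only [sub_self, map_zero]
        have := le_max_left 0 (E j (w - u) - E k (w - u))
        have h2 : (0 : ℝ) ≤ 2 / √3 := by positivity
        exact mul_nonneg h2 (by linarith)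
      · exact (resp hpw).gen
    have empty : RE P S i j k u w →
        Wk (HEdge P S) (T i u w) v w (2 / √3 * (-2 * E j (w - v) - E k (w - v))) := by
      intro hre
      by_cases hpw : p = w
      · have := c3 hre
        rwa [hpw] at this
      · refine ((c3 hre).trans ((resp hpw).empty hre)).mono le_rfl (le_of_eq ?_)
        rw [ew, ew]; ring
    have steep : E k (v - u) ≤ E j (v - u) →
        (∀ q ∈ P, q ∈ Tri u v w → q ≠ u → E k (q - v) ≤ E j (q - v)) →
        Wk (HEdge P S) (T i u w) v w (2 / √3 * (-E j (w - v) - 2 * E k (w - v))) := by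
      intro hvs hq
      have hds := hq p hp.mem hp.tri hp.neu.symm
      by_cases hpw : p = w
      · have := c2 hds
        rwa [hpw] at this
      · have hps : E k (p - u) ≤ E j (p - u) := by
          have := Esub k p v u
          have := Esub j p v u
          linarith
        have hcp := (hp.next.resolve_left hpw).left
        refine ((c2 hds).trans ((resp hpw).steep hps ?_)).mono le_rfl (le_of_eq ?_)
        · intro q hqP hqT hqu
          have hqT' : q ∈ Tri u v w := Tri_swap (Tri_sub (Tri_swap hp.tri) (Tri_swap hqT))
          have h1 := hp.ext q hqP hqT' hqu
          obtain ⟨e1, e2, -⟩ := h.expand (p - v) (p - u) (q - p)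
          obtain ⟨a, b, ha, hb, -, -, hE⟩ := Tri_E hqT
          have h2 : 0 ≤ cr j k (q - p) (p - u) := by
            have e : cr j k (q - p) (p - u) = cr j k (q - u) (p - u) := by
              simp only [cr, map_sub]; ring
            rw [e, (cr_of_comb hE).2, cr_self]; positivity
          have h3 : 0 ≤ cr j k (p - v) (q - p) := by
            have e : cr j k (p - v) (q - p) = cr j k (p - v) (q - v) := by
              simp only [cr, map_sub]; ring
            rw [e]; exact h1
          rw [hdP] at e1 e2
          nlinarith [mul_nonneg h2 (sub_nonneg.2 hds), mul_nonneg h3 (sub_nonneg.2 hps)]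
        · rw [ew, ew]; ring
    refine ⟨?_, empty, steep⟩
    rcases lt_or_ge (E j (p - v)) (E k (p - v)) with hlt | hle
    · refine ((c1 hlt).trans gen').mono le_rfl (le_of_eq ?_)
      rw [ew, ew]; ring
    · have hsum := h.sum (p - v)
      have hdi : 0 < E i (p - v) := by rw [Esub i p v u]; linarith
      have hdk : E k (p - v) < 0 := by linarith
      have hvs : E k (v - u) ≤ E j (v - u) := by
        rw [cr] at hd
        by_contra hc
        push Not at hc
        nlinarith [mul_nonneg (sub_nonneg.2 hle) (neg_nonneg.2 hv.negk.le),
          mul_pos (sub_pos.2 hc) (neg_pos.2 hdk)]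
      refine (steep hvs ?_).mono le_rfl ?_
      · intro q hqP hqT hqu
        have h1 := hp.ext q hqP hqT hqu
        obtain ⟨e1, e2, -⟩ := h.expand (p - v) (v - u) (q - v)
        obtain ⟨a, b, ha, hb, -, -, hE⟩ := Tri_E hqT
        have h2 : 0 ≤ cr j k (q - v) (v - u) := by
          have e : cr j k (q - v) (v - u) = cr j k (q - u) (v - u) := by
            simp only [cr, map_sub]; ring
          have := hv.left
          rw [e, (cr_of_comb hE).2, cr_self]; positivity
        nlinarith [mul_nonneg h2 (sub_nonneg.2 hle), mul_nonneg h1 (sub_nonneg.2 hvs)]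
      · have h2 : (0 : ℝ) ≤ 2 / √3 := by positivity
        refine mul_le_mul_of_nonneg_left ?_ h2
        have h3 := le_max_right 0 (E j (w - u) - E k (w - u))
        have := Esub j w v u
        have := Esub k w v u
        linarith

/-! ### The induction -/

lemma SameSub.symm {S : Set (Pt × Pt)} {i : ℕ} {u p q : Pt} (h : SameSubPos S i u p q) :
    SameSubPos S i u q p := by
  intro z hz hi hc
  exact h z hz hi (by rwa [mul_comm])

/-- One step of the induction on `E i (w - u)`. -/
lemma M_step {P : Set Pt} {S : Set (Pt × Pt)} (H : Plane P S) (hfin : P.Finite)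
    (hG : ∀ p ∈ P, ∀ q ∈ P, p ≠ q → ∀ i < 3, E i (q - p) ≠ 0)
    {i : ℕ} (hi : i < 3) {u w : Pt} (hu : u ∈ P) (hw : w ∈ P) (huw : u ≠ w)
    (hsw : CanSee S u w) (hwi : inPos i u w)
    (ih : ∀ i' < 3, ∀ u' ∈ P, ∀ w' ∈ P, u' ≠ w' → CanSee S u' w' → inPos i' u' w' →
      E i' (w' - u') < E i (w - u) → M P S i' u' w') : M P S i u w := by
  have hpos : (0 : ℝ) ≤ 2 / √3 := by positivity
  obtain ⟨v, ⟨hvP, hvu, hvi, hsv, hss⟩, hmin⟩ := Set.exists_min_image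
    {y | y ∈ P ∧ y ≠ u ∧ inPos i u y ∧ CanSee S u y ∧ SameSubPos S i u w y}
    (fun y => E i (y - u)) (hfin.subset fun q hq => hq.1)
    ⟨w, hw, huw.symm, hwi, hsw, fun z _ _ hc => absurd hc (not_lt.2 (mul_self_nonneg _))⟩
  intro j k h
  obtain ⟨hwj, hwk⟩ := (h.inPos_iff u w).1 hwi
  have huT : u ∈ T i u w := h.mem_T.2 (by
    have := h.sum (w - u)
    simp only [sub_self, map_zero]; refine ⟨le_rfl, le_rfl, ?_⟩; linarith)
  have hwT : w ∈ T i u w := h.mem_T.2 ⟨hwj.le, hwk.le, le_rfl⟩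
  by_cases hvw : v = w
  · subst hvw
    have hedge : HEdge P S u v := by
      refine Or.inl ⟨hu, hvP, i, hi, hwi, hsw, fun y hy hyu hyi hsy hsub => ?_⟩
      rw [projLen_eq, projLen_eq]
      exact hmin y ⟨hy, hyu, hyi, hsy, hsub⟩
    have hd : dst u v ≤ 2 / √3 * (-E j (v - u) - E k (v - u)) := by
      rw [h.dst_eq]
      refine mul_le_mul_of_nonneg_left ?_ hpos
      rw [Real.sqrt_le_left (by linarith)]
      nlinarith [mul_pos_of_neg_of_neg hwj hwk]
    refine ⟨Wk.single hedge huT hwT (hd.trans (mul_le_mul_of_nonneg_left ?_ hpos)),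
      fun _ => Wk.single hedge huT hwT (hd.trans (mul_le_mul_of_nonneg_left ?_ hpos))⟩
    · have := le_max_left (-E j (v - u)) (-E k (v - u)); linarith
    · linarith
  obtain ⟨hvj, hvk⟩ := (h.inPos_iff u v).1 hvi
  have hvle : E i (v - u) ≤ E i (w - u) := hmin w
    ⟨hw, huw.symm, hwi, hsw, fun z _ _ hc => absurd hc (not_lt.2 (mul_self_nonneg _))⟩
  have key : ∀ j k, Tr i j k → 0 < cr j k (w - u) (v - u) →
      Wk (HEdge P S) (T i u w) u w
        (2 / √3 * (-E j (w - u) - E k (w - u) + max (-E j (w - u)) (-E k (w - u)))) ∧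
      (RE P S i j k u w →
        Wk (HEdge P S) (T i u w) u w (2 / √3 * (-2 * E j (w - u) - E k (w - u)))) := by
    clear hvj hvk hwj hwk h
    intro j k h hleft
    obtain ⟨hvj, hvk⟩ := (h.inPos_iff u v).1 hvi
    obtain ⟨hwj, hwk⟩ := (h.inPos_iff u w).1 hwi
    obtain ⟨κ, hκ, hcP⟩ := h.crossP_eq
    have hκ2 : 0 < κ ^ 2 := by positivity
    -- the lowest vertex of the triangle `uvw` is visible from `u`, hence it is `v`
    have hlow : ∀ q ∈ P, q ∈ Tri u v w → q ≠ u → E i (v - u) ≤ E i (q - u) := by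
      obtain ⟨r, ⟨hr, hrT, hru⟩, hrm⟩ := Set.exists_min_image
        {y | y ∈ P ∧ y ∈ Tri u v w ∧ y ≠ u} (fun y => E i (y - u))
        (hfin.subset fun q hq => hq.1) ⟨w, hw, Tri_Y u v w, huw.symm⟩
      obtain ⟨α, β, hα, hβ, -, hre, hE⟩ := Tri_E hrT
      have hαβ : 0 < α + β := by
        by_contra hc
        have h1 : α = 0 := by linarith
        have h2 : β = 0 := by linarith
        rw [h1, h2, zero_smul, zero_smul, add_zero] at hre
        exact hru (sub_eq_zero.1 hre)
      have hneg : ∀ m, E m (v - u) < 0 → E m (w - u) < 0 → E m (r - u) < 0 := by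
        intro m h1 h2
        rw [hE]
        rcases hα.lt_or_eq with h3 | h3
        · nlinarith
        · nlinarith
      have hrj := hneg j hvj hwj
      have hrk := hneg k hvk hwk
      have hsr : CanSee S u r := by
        refine H.sees_of_extreme hu hvP hw hr hvu.symm huw hsv hsw hrT hru (E i) ?_ ?_
        · intro q hq hqT hqu
          have := hrm q ⟨hq, hqT, hqu⟩
          simp only [map_sub] at this
          linarith
        · have := h.sum (r - u)
          rw [map_sub] at this
          linarith
      have hsub : SameSubPos S i u w r := by
        intro z hz hzi hc
        have h1 := hss z hz hzi
        rw [hcP, hcP] at hc h1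
        rw [(cr_of_comb hE).1] at hc
        apply h1
        by_contra h2
        push Not at h2
        nlinarith [mul_nonneg hα h2, mul_nonneg hβ (mul_self_nonneg (κ * cr j k (z - u) (w - u)))]
      intro q hq hqT hqu
      exact (hmin r ⟨hr, hru, (h.inPos_iff u r).2 ⟨hrj, hrk⟩, hsr, hsub⟩).trans
        (hrm q ⟨hq, hqT, hqu⟩)
    have hch : Ch P S i j k u w v := by
      refine ⟨hvP, hvu.symm, hvj, hvk, hsv, hleft, ?_, ?_⟩
      · rintro z hz ⟨s, t, hs, ht, e⟩
        have hzE := comb_E e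
        have hzi : inPos i u z := by
          rw [h.inPos_iff, hzE, hzE]; constructor <;> nlinarith
        apply hss z hz hzi
        rw [hcP, hcP, (cr_of_comb hzE).2, (cr_of_comb hzE).2, cr_self, cr_self,
          cr_swap j k (v - u) (w - u)]
        have : 0 < κ ^ 2 * (s * t * cr j k (w - u) (v - u) ^ 2) := by positivity
        linarith
      · intro q hq hqT hqu hqv
        refine lt_of_le_of_ne (hlow q hq hqT hqu) fun hc => ?_
        refine hG v hvP q hq (Ne.symm hqv) i hi ?_
        rw [Esub i q v u, hc, sub_self]
    have hvlt : E i (v - u) < E i (w - u) :=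
      hch.low w hw (Tri_Y u v w) huw.symm (Ne.symm hvw)
    have hTv : T i u v ⊆ T i u w := fun x hx => by
      rw [h.mem_T] at hx ⊢
      exact ⟨hx.1, hx.2.1, hx.2.2.trans hvle⟩
    -- nothing visible is to the right of `uv` and as low as `v`
    have hrev : RE P S i j k u v := by
      intro r hr hri hsr hsub hrv
      by_contra hc
      push Not at hc
      have hru : r ≠ u := by rintro rfl; simp [cr] at hc
      have hrv' : r ≠ v := by rintro rfl; rw [cr_self] at hc; exact lt_irrefl _ hc
      have hsub' : SameSubPos S i u w r := by
        intro z hz hzi hlt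
        have h1 := hss z hz hzi
        have h2 := hsub z hz hzi
        rw [hcP, hcP] at hlt h1 h2
        have hzu : z ≠ u := by
          rintro rfl; simp [cr] at hlt
        have hzP : z ∈ P := by
          rcases hz with hz | hz
          · exact (H.mem _ hz).2
          · exact (H.mem _ hz).1
        by_cases hzv : z = v
        · rw [hzv, cr_swap j k _ (w - u), cr_swap j k _ (r - u)] at hlt
          have : 0 < κ ^ 2 * (cr j k (w - u) (v - u) * cr j k (r - u) (v - u)) := by positivity
          linarith
        · have h3 := H.cr_ne h hu hzP hvP hzu.symm hzv hvu.symm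
          have h4 : 0 < (κ * cr j k (z - u) (v - u)) ^ 2 := by
            have := mul_ne_zero hκ h3
            positivity
          push Not at h1 h2
          nlinarith [mul_nonneg h1 h2, mul_neg_of_pos_of_neg h4 hlt]
      have h5 := hmin r ⟨hr, hru, hri, hsr, hsub'⟩
      refine hG v hvP r hr hrv'.symm i hi ?_
      rw [Esub i r v u]
      linarith
    have wuv := (ih i hi u hu v hvP hvu.symm hsv hvi hvlt j k h).2 hrev
    have res := Ch.res H hfin hG h hu hw huw hwj hwk hsw ih _ v hch le_rfl
    have ej := Esub j w v u
    have ek := Esub k w v u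
    refine ⟨((wuv.mono hTv le_rfl).trans res.gen).mono le_rfl (le_of_eq ?_), fun hre =>
      ((wuv.mono hTv le_rfl).trans (res.empty hre)).mono le_rfl (le_of_eq ?_)⟩
    · have : -E j (w - u) + max 0 (E j (w - u) - E k (w - u)) =
          max (-E j (w - u)) (-E k (w - u)) := by
        rw [← max_add_add_left]; congr 1 <;> ring
      rw [← this, ej, ek]; ring
    · rw [ej, ek]; ring
  have hne := H.cr_ne h hu hw hvP huw (Ne.symm hvw) hvu.symm
  rcases lt_or_gt_of_ne hne with hc | hc
  · have hc' : 0 < cr k j (w - u) (v - u) := by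
      have : cr k j (w - u) (v - u) = -cr j k (w - u) (v - u) := by simp only [cr]; ring
      linarith
    refine ⟨((key k j h.swap hc').1).mono le_rfl (le_of_eq ?_), fun hre => ?_⟩
    · rw [max_comm]; ring
    · have := hre v hvP hvi hsv hss hvle
      rw [cr_swap] at this
      linarith
  · exact key j k h hc

/-- The claim holds for all pairs, by induction on the finite set of heights `E i (w - u)`. -/
lemma M_all {P : Set Pt} {S : Set (Pt × Pt)} (H : Plane P S) (hfin : P.Finite)
    (hG : ∀ p ∈ P, ∀ q ∈ P, p ≠ q → ∀ i < 3, E i (q - p) ≠ 0) :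
    ∀ i < 3, ∀ u ∈ P, ∀ w ∈ P, u ≠ w → CanSee S u w → inPos i u w → M P S i u w := by
  let V : Set ℝ := (fun x : ℕ × Pt × Pt => E x.1 (x.2.2 - x.2.1)) '' (Set.Iio 3 ×ˢ P ×ˢ P)
  have hV : V.Finite := ((Set.finite_Iio 3).prod (hfin.prod hfin)).image _
  have hmem : ∀ i < 3, ∀ u ∈ P, ∀ w ∈ P, E i (w - u) ∈ V := fun i hi u hu w hw =>
    ⟨(i, u, w), ⟨hi, hu, hw⟩, rfl⟩
  have main : ∀ c ∈ V, ∀ i < 3, ∀ u ∈ P, ∀ w ∈ P, u ≠ w → CanSee S u w → inPos i u w →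
      E i (w - u) = c → M P S i u w := by
    intro c hc
    refine Set.WellFoundedOn.induction (r := (· < ·)) (P := fun c => ∀ i < 3, ∀ u ∈ P, ∀ w ∈ P,
      u ≠ w → CanSee S u w → inPos i u w → E i (w - u) = c → M P S i u w)
      hV.wellFoundedOn hc ?_
    intro c _ ih i hi u hu w hw huw hsw hwi hEc
    refine M_step H hfin hG hi hu hw huw hsw hwi ?_
    intro i' hi' u' hu' w' hw' hne hs' hin' hlt
    exact ih _ (hmem i' hi' u' hu' w' hw') (hEc ▸ hlt) i' hi' u' hu' w' hw' hne hs' hin' rfl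
  exact fun i hi u hu w hw huw hsw hwi =>
    main _ (hmem i hi u hu w hw) i hi u hu w hw huw hsw hwi rfl

/-! ### From the inductive claim to the angular bound -/

lemma GenPos.E_ne {P : Set Pt} (hGP : GenPos P) :
    ∀ p ∈ P, ∀ q ∈ P, p ≠ q → ∀ i < 3, E i (q - p) ≠ 0 := by
  intro p hp q hq hpq i hi h0
  obtain ⟨h1, h2, h3⟩ := hGP.1 p hp q hq hpq
  interval_cases i
  · rw [E0, Prod.snd_sub] at h0; apply h1; linarith
  · rw [E1, Prod.snd_sub, Prod.fst_sub] at h0; apply h3; linarith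
  · rw [E2, Prod.snd_sub, Prod.fst_sub] at h0; apply h2; linarith

/-- The bound of the inductive claim is the angular expression of the theorem. -/
lemma Tr.bound_eq {i j k : ℕ} (h : Tr i j k) {u w : Pt} (huw : 0 < dst u w)
    (hw : inPos i u w) :
    (√3 * Real.cos (Real.arccos (projLen i u w / dst u w)) +
      Real.sin (Real.arccos (projLen i u w / dst u w))) * dst u w =
    2 / √3 * (-E j (w - u) - E k (w - u) + max (-E j (w - u)) (-E k (w - u))) := by
  have hsq : dst u w ^ 2 = projLen i u w ^ 2 + |(rel i u w).1| ^ 2 := by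
    have h1 := h.rel_fst u w
    have h2 : 3 * |(rel i u w).1| ^ 2 = (E j (w - u) - E k (w - u)) ^ 2 := by
      rw [← sq_abs (E j (w - u) - E k (w - u)), ← h1, mul_pow, Real.sq_sqrt (by norm_num)]
    have h3 : (2 / √3) ^ 2 = 4 / 3 := by rw [div_pow, Real.sq_sqrt (by norm_num)]; norm_num
    rw [h.dst_eq, mul_pow, h3, Real.sq_sqrt (by
      nlinarith [sq_nonneg (E j (w - u) + E k (w - u)), sq_nonneg (E j (w - u)),
        sq_nonneg (E k (w - u))]), projLen_eq, h.sum]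
    linarith
  obtain ⟨hj, hk⟩ := (h.inPos_iff u w).1 hw
  have hpl : 0 < projLen i u w := by rw [projLen_eq, h.sum]; linarith
  have hle : projLen i u w ≤ dst u w := by
    refine le_of_sq_le_sq ?_ huw.le
    nlinarith [sq_nonneg |(rel i u w).1|]
  have hsin : √(1 - (projLen i u w / dst u w) ^ 2) * dst u w = |(rel i u w).1| := by
    have e : 1 - (projLen i u w / dst u w) ^ 2 = (|(rel i u w).1| / dst u w) ^ 2 := by
      field_simp; linarith
    rw [e, Real.sqrt_sq (by positivity)]
    field_simp
  rw [Real.cos_arccos (by have := div_pos hpl huw; linarith) ((div_le_one huw).2 hle),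
    Real.sin_arccos, add_mul, hsin]
  have h1 := h.rel_fst u w
  have h3 := sq3
  have h30 : (0 : ℝ) < √3 := by positivity
  have e1 : √3 * (projLen i u w / dst u w) * dst u w = √3 * projLen i u w := by field_simp
  rw [e1, projLen_eq, h.sum]
  refine mul_left_cancel₀ h30.ne' ?_
  have e2 : √3 * (2 / √3 * (-E j (w - u) - E k (w - u) + max (-E j (w - u)) (-E k (w - u)))) =
      2 * (-E j (w - u) - E k (w - u) + max (-E j (w - u)) (-E k (w - u))) := by field_simp
  rw [e2, mul_add, h1, ← mul_assoc, h3]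
  rcases le_total (E j (w - u)) (E k (w - u)) with hc | hc
  · rw [abs_of_nonpos (by linarith), max_eq_left (by linarith)]; ring
  · rw [abs_of_nonneg (by linarith), max_eq_right (by linarith)]; ring

/-- The bound of the inductive claim is at most twice the distance. -/
lemma Tr.bound_le {i j k : ℕ} (h : Tr i j k) {u w : Pt} (hw : inPos i u w) :
    2 / √3 * (-E j (w - u) - E k (w - u) + max (-E j (w - u)) (-E k (w - u))) ≤
      2 * dst u w := by
  obtain ⟨hj, hk⟩ := (h.inPos_iff u w).1 hw
  rw [h.dst_eq, mul_left_comm]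
  refine mul_le_mul_of_nonneg_left ?_ (by positivity)
  have key : (-E j (w - u) - E k (w - u) + max (-E j (w - u)) (-E k (w - u))) / 2 ≤
      √(E j (w - u) ^ 2 + E j (w - u) * E k (w - u) + E k (w - u) ^ 2) := by
    refine Real.le_sqrt_of_sq_le ?_
    have hjk := mul_pos_of_neg_of_neg hj hk
    rcases le_total (E j (w - u)) (E k (w - u)) with hc | hc
    · rw [max_eq_left (by linarith)]
      nlinarith [sq_nonneg (E k (w - u))]
    · rw [max_eq_right (by linarith)]
      nlinarith [sq_nonneg (E j (w - u))]
  linarith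

/-- Of two distinct vertices, one is in a positive cone of the other. -/
lemma exists_inPos {P : Set Pt}
    (hG : ∀ p ∈ P, ∀ q ∈ P, p ≠ q → ∀ i < 3, E i (q - p) ≠ 0) {u w : Pt} (hu : u ∈ P)
    (hw : w ∈ P) (huw : u ≠ w) : ∃ i < 3, inPos i u w ∨ inPos i w u := by
  have t0 : Tr 0 1 2 := by simp [Tr]
  have h0 := hG u hu w hw huw 0 (by norm_num)
  have h1 := hG u hu w hw huw 1 (by norm_num)
  have h2 := hG u hu w hw huw 2 (by norm_num)
  have ej : ∀ m, E m (u - w) = -E m (w - u) := fun m => by simp only [map_sub]; ring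
  have f0 := t0.inPos_iff
  have f1 := t0.cyc.inPos_iff
  have f2 := t0.cyc.cyc.inPos_iff
  have hs := t0.sum (w - u)
  rcases lt_or_gt_of_ne h0 with h0 | h0 <;> rcases lt_or_gt_of_ne h1 with h1 | h1 <;>
    rcases lt_or_gt_of_ne h2 with h2 | h2
  · linarith
  · exact ⟨2, by norm_num, Or.inl ((f2 u w).2 ⟨h0, h1⟩)⟩
  · exact ⟨1, by norm_num, Or.inl ((f1 u w).2 ⟨h2, h0⟩)⟩
  · exact ⟨0, by norm_num, Or.inr ((f0 w u).2 ⟨by rw [ej]; linarith, by rw [ej]; linarith⟩)⟩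
  · exact ⟨0, by norm_num, Or.inl ((f0 u w).2 ⟨h1, h2⟩)⟩
  · exact ⟨1, by norm_num, Or.inr ((f1 w u).2 ⟨by rw [ej]; linarith, by rw [ej]; linarith⟩)⟩
  · exact ⟨2, by norm_num, Or.inr ((f2 w u).2 ⟨by rw [ej]; linarith, by rw [ej]; linarith⟩)⟩
  · linarith

/-- **Theorem 2.** For mutually visible vertices `u`, `w` with `w` in the positive cone
`Cᵢ` of `u`, the constrained half-theta6-graph contains a path from `u` to `w` of length at
most `(√3·cos α + sin α)·|uw|`, where `α` is the unsigned angle between `uw` and the cone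
bisector (so `cos α = projLen i u w / |uw|`), and the path lies inside the canonical
triangle `T(u,w)`. Consequently the graph is a 2-spanner of the visibility graph. -/
theorem stmt_10 (P : Set Pt) (S : Set (Pt × Pt)) (hPfin : P.Finite)
    (hSP : ∀ c ∈ S, c.1 ∈ P ∧ c.2 ∈ P)
    (hSnc : ∀ c ∈ S, ∀ d ∈ S, c ≠ d → ¬ PCross c.1 c.2 d.1 d.2)
    (hGP : GenPos P) :
    (∀ u ∈ P, ∀ w ∈ P, u ≠ w → CanSee S u w → ∀ i < 3, inPos i u w →
      ∃ (n : ℕ) (f : Fin (n + 1) → Pt),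
        IsPath (HEdge P S) f ∧ f 0 = u ∧ f (Fin.last n) = w ∧
        pathLen f ≤ (Real.sqrt 3 * Real.cos (Real.arccos (projLen i u w / dst u w)) +
          Real.sin (Real.arccos (projLen i u w / dst u w))) * dst u w ∧
        ∀ j, Real.sqrt 3 * |(rel i u (f j)).1| ≤ (rel i u (f j)).2 ∧
          (rel i u (f j)).2 ≤ projLen i u w) ∧
    (∀ u ∈ P, ∀ w ∈ P, u ≠ w → CanSee S u w →
      ∃ (n : ℕ) (f : Fin (n + 1) → Pt),
        IsPath (HEdge P S) f ∧ f 0 = u ∧ f (Fin.last n) = w ∧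
        pathLen f ≤ 2 * dst u w) := by
  have H : Plane P S := ⟨hSP, hSnc, fun p hp q hq r hr h1 h2 h3 h0 =>
    hGP.2 p hp q hq r hr h1 h2 h3 (collinear_of_crossP h1 h0)⟩
  have hG := hGP.E_ne
  have hM := M_all H hPfin hG
  have hdist : ∀ u w : Pt, u ≠ w → 0 < dst u w := by
    intro u w h
    rw [dst, Real.sqrt_pos]
    by_contra hc
    have h1 : (u.1 - w.1) ^ 2 = 0 := by nlinarith [sq_nonneg (u.1 - w.1), sq_nonneg (u.2 - w.2)]
    have h2 : (u.2 - w.2) ^ 2 = 0 := by nlinarith [sq_nonneg (u.1 - w.1), sq_nonneg (u.2 - w.2)]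
    exact h (Prod.ext (sub_eq_zero.1 (pow_eq_zero_iff two_ne_zero |>.1 h1))
      (sub_eq_zero.1 (pow_eq_zero_iff two_ne_zero |>.1 h2)))
  constructor
  · intro u hu w hw huw hs i hi hin
    obtain ⟨j, k, h⟩ := Tr.exists hi
    obtain ⟨n, f, h1, h2, h3, h4, h5⟩ := (hM i hi u hu w hw huw hs hin j k h).1.to_fin
    refine ⟨n, f, h1, h2, h3, ?_, h5⟩
    rw [h.bound_eq (hdist u w huw) hin]
    exact h4
  · intro u hu w hw huw hs
    obtain ⟨i, hi, hin | hin⟩ := exists_inPos hG hu hw huw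
    · obtain ⟨j, k, h⟩ := Tr.exists hi
      obtain ⟨n, f, h1, h2, h3, h4, -⟩ := (hM i hi u hu w hw huw hs hin j k h).1.to_fin
      exact ⟨n, f, h1, h2, h3, h4.trans (h.bound_le hin)⟩
    · obtain ⟨j, k, h⟩ := Tr.exists hi
      obtain ⟨n, f, h1, h2, h3, h4, -⟩ :=
        ((hM i hi w hw u hu huw.symm hs.symm hin j k h).1.symm HEdge.symm).to_fin
      exact ⟨n, f, h1, h2, h3, h4.trans (by rw [dst_comm u w]; exact h.bound_le hin)⟩

end CHT6
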